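/- There is a constant C such that for every n ≥ 2, the symmetric group S_n has a presentation with at most 18 generators and at most 58 relators whose length is at most C·(1 + log₂ n). -/

import Mathlib

/-- `G` has a presentation with at most `g` generators, at most `r` relators, and
length (number of generators plus the total length of the reduced relator words) at
most `L`. -/
def HasBoundedPresentation (G : Type) [Group G] (g r : ℕ) (L : ℝ) : Prop :=
  ∃ (m : ℕ) (π : FreeGroup (Fin m) →* G) (R : Finset (FreeGroup (Fin m))),
    m ≤ g ∧ Function.Surjective π ∧ R.card ≤ r ∧
    π.ker = Subgroup.normalClosure (R : Set (FreeGroup (Fin m))) ∧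
    ((m + ∑ w ∈ R, FreeGroup.norm w : ℕ) : ℝ) ≤ L

/-! The symmetric group on `Ω ∪ {∗}` is presented by the star transpositions `(∗ a)` with one braid
relation for each pair and one commutation relation for each triple of points of `Ω`. If the stars
are conjugate under elements that act on `Ω` with few orbits on pairs and triples, then finitely
many of these relations imply all others. For `Ω` the projective line over `ZMod p` the maps
`x : i ↦ i + 1`, `h : i ↦ u ^ 2 * i` and `w : i ↦ -1 / i` of `PSL(2, p)`, with `u` a primitive root,
serve this purpose. Together with `t : i ↦ 4 * i` they satisfy a bounded number of relations that
force this action; since `t * x * t⁻¹ = x ^ 4`, Horner's scheme in base `4` writes every power of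
`x` that occurs as a word of length `O(log p)`.

These elements permute the stars, but have to be words in the stars, for otherwise the relations
define a larger group. The stars generate a normal subgroup, and it has to be shown that the
quotient by it is trivial. To this end the cycle `(0 1 … p - 1 ∞)` is cut into four cycles of odd
length `M` and one of bounded length `L`, using star transpositions. The alternating group on the
four blocks and the doubling of a block satisfy relations that collapse once the stars vanish, so
that `x ^ L = 1`; together with `x ^ p = 1` this yields `x = 1` in the quotient, and the other
generators follow.

Finally, permuting an initial segment of the line with two disjoint copies of it, and adding at most
one further point, every degree is reached from a prime supplied by Bertrand's postulate. -/

/-! ### Star families -/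

section StarFamilies

open Equiv

/-- The word that represents the transposition `(a b)` in terms of the star transpositions
`g = (∗ a)` and `h = (∗ b)`. -/
def transp {G : Type*} [Mul G] (g h : G) : G := g * h * g

/-- The relations between the star transpositions `s a = (∗ a)`, which share the point `∗`. Together
they present the symmetric group on `Ω ∪ {∗}` (Carmichael). -/
structure IsStarFamily {Ω G : Type*} [Group G] (s : Ω → G) : Prop where
  mul_self : ∀ a, s a * s a = 1
  braid : ∀ a b, a ≠ b → transp (s a) (s b) = transp (s b) (s a)
  commute : ∀ a b c, a ≠ b → a ≠ c → b ≠ c → Commute (transp (s a) (s b)) (s c)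

/-- Conjugation by `g` permutes the family `s` as prescribed by `π`. -/
def ConjPermutes {Ω G : Type*} [Group G] (s : Ω → G) (g : G) (π : Perm Ω) : Prop :=
  ∀ ω, SemiconjBy g (s ω) (s (π ω))

variable {Ω Ω' G H : Type*} [Group G] [Group H] {s : Ω → G}

theorem map_transp (f : G →* H) (g h : G) : f (transp g h) = transp (f g) (f h) := by
  simp [transp]

theorem semiconjBy_transp {g a a' b b' : G} (ha : SemiconjBy g a a')
    (hb : SemiconjBy g b b') : SemiconjBy g (transp a b) (transp a' b') :=
  (ha.mul_right hb).mul_right ha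

namespace ConjPermutes

variable {g g' y y' : G} {π π' η η' : Perm Ω}

theorem one : ConjPermutes s 1 1 := fun _ => SemiconjBy.one_left _

theorem mul (h : ConjPermutes s g π) (h' : ConjPermutes s g' π') :
    ConjPermutes s (g * g') (π * π') := fun ω => (h (π' ω)).mul_left (h' ω)

theorem inv (h : ConjPermutes s g π) : ConjPermutes s g⁻¹ π⁻¹ := fun ω => by
  simpa using (h (π⁻¹ ω)).inv_symm_left

theorem pow (h : ConjPermutes s g π) (n : ℕ) : ConjPermutes s (g ^ n) (π ^ n) := by
  induction n with
  | zero => simpa using one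
  | succ n ih => rw [pow_succ, pow_succ]; exact ih.mul h

theorem zpow (h : ConjPermutes s g π) : ∀ n : ℤ, ConjPermutes s (g ^ n) (π ^ n)
  | .ofNat n => by simpa using h.pow n
  | .negSucc n => by simpa only [zpow_negSucc] using (h.pow (n + 1)).inv

theorem comp {f : Ω' → Ω} {ρ : Perm Ω'} (h : ConjPermutes s g π) (hf : ∀ ω, π (f ω) = f (ρ ω)) :
    ConjPermutes (s ∘ f) g ρ := fun ω => by
  simpa [hf] using h (f ω)

theorem semiconjBy_of_sameCycle (hy : ConjPermutes s y η) (hy' : ConjPermutes s y' η')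
    (hg : SemiconjBy g y y') (hπ : SemiconjBy π η η') {o ω : Ω} (ho : η.SameCycle o ω)
    (h : SemiconjBy g (s o) (s (π o))) : SemiconjBy g (s ω) (s (π ω)) := by
  obtain ⟨i, rfl⟩ := ho
  have hs : s ((η ^ i) o) = y ^ i * s o * (y ^ i)⁻¹ :=
    eq_mul_inv_of_mul_eq (hy.zpow i o).eq.symm
  have hs' : s (π ((η ^ i) o)) = y' ^ i * s (π o) * (y' ^ i)⁻¹ := by
    rw [← Perm.mul_apply, (hπ.zpow_right i).eq]
    exact eq_mul_inv_of_mul_eq (hy'.zpow i (π o)).eq.symm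
  rw [hs, hs']
  exact ((hg.zpow_right i).mul_right h).mul_right (hg.zpow_right i).inv_right

theorem of_sameCycle (hy : ConjPermutes s y η) (hy' : ConjPermutes s y' η')
    (hg : SemiconjBy g y y') (hπ : SemiconjBy π η η')
    (h : ∀ ω, ∃ o, η.SameCycle o ω ∧ SemiconjBy g (s o) (s (π o))) : ConjPermutes s g π := fun ω =>
  let ⟨_, ho, hgo⟩ := h ω
  semiconjBy_of_sameCycle hy hy' hg hπ ho hgo

end ConjPermutes

/-- The permutations of the index set that are induced by conjugation. -/
def inducedPerms (s : Ω → G) : Subgroup (Perm Ω) where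
  carrier := {π | ∃ y, ConjPermutes s y π}
  one_mem' := ⟨1, .one⟩
  mul_mem' := fun ⟨y, hy⟩ ⟨y', hy'⟩ => ⟨y * y', hy.mul hy'⟩
  inv_mem' := fun ⟨y, hy⟩ => ⟨y⁻¹, hy.inv⟩

/-- The elements of the group that permute the family `s` by conjugation. -/
def conjPermuters (s : Ω → G) : Subgroup G where
  carrier := {g | ∃ π, ConjPermutes s g π}
  one_mem' := ⟨1, .one⟩
  mul_mem' := fun ⟨π, h⟩ ⟨π', h'⟩ => ⟨π * π', h.mul h'⟩
  inv_mem' := fun ⟨π, h⟩ => ⟨π⁻¹, h.inv⟩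

theorem conjPermuters_le_normalizer :
    conjPermuters s ≤ Subgroup.normalizer (Subgroup.closure (Set.range s)) := by
  rw [Subgroup.le_normalizer_closure_iff]
  rintro g ⟨π, hπ⟩ _ ⟨ω, rfl⟩
  rw [mul_inv_eq_of_eq_mul (hπ ω).eq]
  exact Subgroup.subset_closure ⟨_, rfl⟩

theorem mul_self_of_mem_inducedPerms {π : Perm Ω} (hπ : π ∈ inducedPerms s) {a : Ω}
    (h : s a * s a = 1) : s (π a) * s (π a) = 1 := by
  obtain ⟨y, hy⟩ := hπ
  have := ((hy a).mul_right (hy a)).eq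
  rwa [h, mul_one, eq_comm, mul_eq_right] at this

theorem braid_of_mem_inducedPerms {π : Perm Ω} (hπ : π ∈ inducedPerms s) {a b : Ω}
    (h : transp (s a) (s b) = transp (s b) (s a)) :
    transp (s (π a)) (s (π b)) = transp (s (π b)) (s (π a)) := by
  obtain ⟨y, hy⟩ := hπ
  have hba := (semiconjBy_transp (hy b) (hy a)).eq
  rw [← h, (semiconjBy_transp (hy a) (hy b)).eq] at hba
  exact mul_right_cancel hba

theorem commute_of_mem_inducedPerms {π : Perm Ω} (hπ : π ∈ inducedPerms s) {a b c : Ω}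
    (h : Commute (transp (s a) (s b)) (s c)) :
    Commute (transp (s (π a)) (s (π b))) (s (π c)) := by
  obtain ⟨y, hy⟩ := hπ
  have hab := semiconjBy_transp (hy a) (hy b)
  have := (hab.mul_right (hy c)).eq
  rw [h.eq, ((hy c).mul_right hab).eq] at this
  exact (mul_right_cancel this).symm

theorem isStarFamily_of_inducedPerms_eq_top (h : inducedPerms s = ⊤) {i j k : Ω}
    (hij : i ≠ j) (hik : i ≠ k) (hjk : j ≠ k) (hsq : s i * s i = 1)
    (hbraid : transp (s i) (s j) = transp (s j) (s i))
    (hcomm : Commute (transp (s i) (s j)) (s k)) : IsStarFamily s := by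
  have mem (π : Perm Ω) : π ∈ inducedPerms s := h ▸ Subgroup.mem_top π
  refine ⟨fun a => ?_, fun a b hab => ?_, fun a b c hab hac hbc => ?_⟩
  · classical
    simpa using mul_self_of_mem_inducedPerms (mem (swap i a)) hsq
  · obtain ⟨π, hπ⟩ := Perm.exists_extending_pair ![i, j] ![a, b]
      (by simp [Function.Injective, Fin.forall_fin_succ, hij, hij.symm])
      (by simp [Function.Injective, Fin.forall_fin_succ, hab, hab.symm])
    obtain ⟨rfl, rfl⟩ : π i = a ∧ π j = b := ⟨hπ 0, hπ 1⟩
    exact braid_of_mem_inducedPerms (mem π) hbraid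
  · obtain ⟨π, hπ⟩ := Perm.exists_extending_pair ![i, j, k] ![a, b, c]
      (by simp [Function.Injective, Fin.forall_fin_succ, hij, hij.symm, hik, hik.symm, hjk,
        hjk.symm])
      (by simp [Function.Injective, Fin.forall_fin_succ, hab, hab.symm, hac, hac.symm, hbc,
        hbc.symm])
    obtain ⟨rfl, rfl, rfl⟩ : π i = a ∧ π j = b ∧ π k = c := ⟨hπ 0, hπ 1, hπ 2⟩
    exact commute_of_mem_inducedPerms (mem π) hcomm

theorem eq_top_of_swap_mem [Finite Ω] [DecidableEq Ω] {K : Subgroup (Perm Ω)} (o : Ω)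
    (h : ∀ a, swap o a ∈ K) : K = ⊤ := by
  rw [eq_top_iff, ← Perm.closure_isSwap, Subgroup.closure_le]
  rintro _ ⟨a, b, -, rfl⟩
  exact SubmonoidClass.swap_mem_trans K (swap_comm o a ▸ h a) (h b)

namespace IsStarFamily

theorem comp (hs : IsStarFamily s) {f : Ω' → Ω} (hf : Function.Injective f) :
    IsStarFamily (s ∘ f) :=
  ⟨fun _ => hs.mul_self _, fun _ _ hab => hs.braid _ _ (hf.ne hab),
    fun _ _ _ hab hac hbc => hs.commute _ _ _ (hf.ne hab) (hf.ne hac) (hf.ne hbc)⟩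

theorem inv_eq (hs : IsStarFamily s) (a : Ω) : (s a)⁻¹ = s a :=
  inv_eq_of_mul_eq_one_left (hs.mul_self a)

theorem conjPermutes_transp [DecidableEq Ω] (hs : IsStarFamily s) {a b : Ω} (hab : a ≠ b) :
    ConjPermutes s (transp (s a) (s b)) (swap a b) := by
  have hbr : s a * s b * s a = s b * s a * s b := hs.braid a b hab
  have ha := hs.mul_self a
  have hb := hs.mul_self b
  intro c
  rcases eq_or_ne c a with rfl | hca
  · rw [swap_apply_left, SemiconjBy, transp]
    grind
  rcases eq_or_ne c b with rfl | hcb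
  · rw [swap_apply_right, SemiconjBy, transp]
    grind
  · rw [swap_apply_of_ne_of_ne hca hcb]
    exact hs.commute a b c hab hca.symm hcb.symm

theorem mem_closure_insert (hs : IsStarFamily s) {S : Set Ω} {k : Ω} (hk : k ∉ S) {g : G}
    (hg : g ∈ Subgroup.closure (s '' insert k S)) :
    g ∈ Subgroup.closure (s '' S) ∨ (∃ c ∈ Subgroup.closure (s '' S), g = c * s k) ∨
      ∃ c ∈ Subgroup.closure (s '' S), ∃ j ∈ S, g = c * s k * s j := by
  have hsS {j : Ω} (hj : j ∈ S) : s j ∈ Subgroup.closure (s '' S) :=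
    Subgroup.subset_closure ⟨j, hj, rfl⟩
  let P (x : G) : Prop := x ∈ Subgroup.closure (s '' S) ∨
    (∃ c ∈ Subgroup.closure (s '' S), x = c * s k) ∨
      ∃ c ∈ Subgroup.closure (s '' S), ∃ j ∈ S, x = c * s k * s j
  have step {i : Ω} (hi : i ∈ insert k S) {x : G} (hx : P x) : P (x * s i) := by
    rcases hi with rfl | hi <;> rcases hx with hx | ⟨c, hc, rfl⟩ | ⟨c, hc, j, hj, rfl⟩
    · exact .inr (.inl ⟨x, hx, rfl⟩)
    · exact .inl (by rwa [mul_assoc, hs.mul_self, mul_one])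
    · have hbr : s i * s j * s i = s j * s i * s j := hs.braid i j (ne_of_mem_of_not_mem hj hk).symm
      exact .inr (.inr ⟨c * s j, mul_mem hc (hsS hj), j, hj, by
        simp only [mul_assoc] at hbr ⊢; rw [hbr]⟩)
    · exact .inl (mul_mem hx (hsS hi))
    · exact .inr (.inr ⟨c, hc, i, hi, rfl⟩)
    rcases eq_or_ne j i with rfl | hji
    · exact .inr (.inl ⟨c, hc, by rw [mul_assoc, hs.mul_self, mul_one]⟩)
    · have hcomm : s j * s k * s j * s i = s i * (s j * s k * s j) :=
        hs.commute j k i (ne_of_mem_of_not_mem hj hk) hji (ne_of_mem_of_not_mem hi hk).symm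
      refine .inr (.inr ⟨c * (s j * s i * s j), mul_mem hc
        (mul_mem (mul_mem (hsS hj) (hsS hi)) (hsS hj)), j, hj, ?_⟩)
      calc c * s k * s j * s i = c * ((s j)⁻¹ * (s j * s k * s j * s i)) := by group
        _ = c * (s j * s i * s j) * s k * s j := by rw [hcomm, hs.inv_eq]; group
  induction hg using Subgroup.closure_induction_right with
  | one => exact .inl (one_mem _)
  | mul_right x _ y hy ih =>
    obtain ⟨i, hi, rfl⟩ := hy
    exact step hi ih
  | mul_inv_cancel x _ y hy ih =>
    obtain ⟨i, hi, rfl⟩ := hy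
    rw [hs.inv_eq i]
    exact step hi ih

theorem eq_one_of_map_eq_one [DecidableEq Ω] (hs : IsStarFamily s) {φ : G →* Perm (Option Ω)}
    (hφ : ∀ ω, φ (s ω) = swap none (some ω)) {S : Set Ω} (hS : S.Finite) {g : G}
    (hg : g ∈ Subgroup.closure (s '' S)) (h : φ g = 1) : g = 1 := by
  induction S, hS using Set.Finite.induction_on generalizing g with
  | empty => simpa using hg
  | @insert k S hk _ ih =>
    have fix : ∀ c ∈ Subgroup.closure (s '' S), φ c (some k) = some k := by
      change _ ≤ (MulAction.stabilizer (Perm (Option Ω)) (some k)).comap φ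
      rw [Subgroup.closure_le]
      rintro _ ⟨j, hj, rfl⟩
      have hjk : k ≠ j := (ne_of_mem_of_not_mem hj hk).symm
      simp [hφ, swap_apply_of_ne_of_ne, hjk]
    rcases hs.mem_closure_insert hk hg with h' | ⟨c, hc, rfl⟩ | ⟨c, hc, j, hj, rfl⟩
    · exact ih h' h
    · simpa [hφ, fix c hc] using congr($h none)
    · have hkj : k = j := by simpa [hφ, fix c hc] using congr($h (some j))
      exact absurd (hkj ▸ hj) hk

theorem injective_of_closure_eq_top [DecidableEq Ω] [Finite Ω] (hs : IsStarFamily s)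
    (htop : Subgroup.closure (Set.range s) = ⊤) (φ : G →* Perm (Option Ω))
    (hφ : ∀ ω, φ (s ω) = swap none (some ω)) : Function.Injective φ :=
  (injective_iff_map_eq_one φ).2 fun g =>
    hs.eq_one_of_map_eq_one hφ Set.finite_univ (by simp [htop])

end IsStarFamily

/-- `g` commutes with the transposition `(a b)`; no condition if `a = b`. -/
def CommutesWithSwap (s : Ω → G) (g : G) (a b : Ω) : Prop :=
  a ≠ b → Commute g (transp (s a) (s b))

namespace CommutesWithSwap

variable {g y : G} {π : Perm Ω} {a b c : Ω}

theorem refl (s : Ω → G) (g : G) (a : Ω) : CommutesWithSwap s g a a := fun h => absurd rfl h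

theorem symm (hs : IsStarFamily s) (h : CommutesWithSwap s g a b) : CommutesWithSwap s g b a :=
  fun hba => hs.braid b a hba ▸ h hba.symm

theorem trans (hs : IsStarFamily s) (hab : CommutesWithSwap s g a b)
    (hbc : CommutesWithSwap s g b c) : CommutesWithSwap s g a c := by
  intro hac
  rcases eq_or_ne a b with rfl | hab'
  · exact hbc hac
  rcases eq_or_ne b c with rfl | hbc'
  · exact hab hac
  classical
  have hb := hs.conjPermutes_transp hab' b
  have hc := hs.conjPermutes_transp hab' c
  rw [swap_apply_right] at hb
  rw [swap_apply_of_ne_of_ne hac.symm hbc'.symm] at hc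
  rw [eq_mul_inv_of_mul_eq (semiconjBy_transp hb hc).eq.symm]
  exact ((hab hab').mul_right (hbc hbc')).mul_right (hab hab').inv_right

theorem map {g' : G} (hy : ConjPermutes s y π) (hg : SemiconjBy y g g')
    (h : CommutesWithSwap s g a b) : CommutesWithSwap s g' (π a) (π b) := by
  intro hab
  have h' := (h (ne_of_apply_ne π hab)).eq
  have hy' := semiconjBy_transp (hy a) (hy b)
  refine mul_right_cancel (b := y) ?_
  rw [← (hg.mul_right hy').eq, h', (hy'.mul_right hg).eq]

theorem of_sameCycle [Finite Ω] (hs : IsStarFamily s) (hy : ConjPermutes s y π)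
    (hg : Commute g y) (h : CommutesWithSwap s g a (π a)) (hb : π.SameCycle a b) :
    CommutesWithSwap s g a b := by
  obtain ⟨n, rfl⟩ := hb.exists_nat_pow_eq
  induction n with
  | zero => exact refl s g a
  | succ n ih =>
    refine trans hs (ih ⟨n, by simp⟩) ?_
    have := map (hy.pow n) (hg.pow_right n).symm.semiconjBy h
    rwa [← Perm.mul_apply, ← pow_succ] at this

end CommutesWithSwap

end StarFamilies

/-! ### Words, relators and the length of a presentation -/

section Presentations

open FreeGroup

variable {α β G H : Type*} [Group G] [Group H]

theorem norm_lift_le [DecidableEq α] [DecidableEq β] {f : α → FreeGroup β} {B : ℕ}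
    (hf : ∀ a, (f a).norm ≤ B) (w : FreeGroup α) : (lift f w).norm ≤ w.norm * B := by
  suffices ∀ L : List (α × Bool), (lift f (mk L)).norm ≤ L.length * B by
    have := this w.toWord
    rwa [mk_toWord] at this
  intro L
  induction L with
  | nil => simp [← one_eq_mk]
  | cons a L ih =>
    have ha : (lift f (mk [a])).norm ≤ B := by
      obtain ⟨a, _ | _⟩ := a <;> simpa using hf a
    calc (lift f (mk (a :: L))).norm = (lift f (mk [a]) * lift f (mk L)).norm := by
          rw [← _root_.map_mul, mul_mk, List.singleton_append]
      _ ≤ B + L.length * B := (FreeGroup.norm_mul_le _ _).trans (add_le_add ha ih)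
      _ = (a :: L).length * B := by rw [List.length_cons]; ring

/-- A word for the power of `x` whose exponent has the base `4` digits `L`, least significant
first, valid whenever `t * x * t⁻¹ = x ^ 4` (Horner's scheme). -/
def hornerWord (t x : G) (L : List ℕ) : G :=
  L.foldr (fun d w => t * w * t⁻¹ * x ^ d) 1

theorem map_hornerWord (f : G →* H) (t x : G) (L : List ℕ) :
    f (hornerWord t x L) = hornerWord (f t) (f x) L := by
  induction L with
  | nil => simp [hornerWord]
  | cons d L ih =>
    simp only [hornerWord, List.foldr_cons] at ih ⊢
    simp [ih]

theorem hornerWord_digits {t x : G} (h : SemiconjBy t x (x ^ 4)) (n : ℕ) :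
    hornerWord t x (Nat.digits 4 n) = x ^ n := by
  suffices ∀ L : List ℕ, hornerWord t x L = x ^ Nat.ofDigits 4 L by
    rw [this, Nat.ofDigits_digits]
  intro L
  induction L with
  | nil => simp [hornerWord]
  | cons d L ih =>
    calc hornerWord t x (d :: L) = t * hornerWord t x L * t⁻¹ * x ^ d := rfl
      _ = (x ^ 4) ^ Nat.ofDigits 4 L * x ^ d := by
        rw [ih, mul_inv_eq_of_eq_mul (h.pow_right _).eq]
      _ = x ^ Nat.ofDigits 4 (d :: L) := by
        rw [← pow_mul, ← pow_add, Nat.ofDigits_cons, add_comm]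

theorem norm_hornerWord_le [DecidableEq α] (t x : α) {L : List ℕ} (hL : ∀ d ∈ L, d < 4) :
    (hornerWord (of t) (of x) L).norm ≤ 5 * L.length := by
  induction L with
  | nil => simp [hornerWord]
  | cons d L ih =>
    obtain ⟨hd, hL⟩ := List.forall_mem_cons.1 hL
    calc (hornerWord (of t) (of x) (d :: L)).norm
        = (of t * hornerWord (of t) (of x) L * (of t)⁻¹ * of x ^ d).norm := rfl
      _ ≤ 1 + (hornerWord (of t) (of x) L).norm + 1 + d := by
        grw [FreeGroup.norm_mul_le, FreeGroup.norm_mul_le, FreeGroup.norm_mul_le,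
          norm_inv_eq, norm_of, norm_of_pow]
      _ ≤ 5 * (d :: L).length := by grind

theorem norm_hornerWord_digits_le [DecidableEq α] (t x : α) (n : ℕ) :
    (hornerWord (of t) (of x) (Nat.digits 4 n)).norm ≤ 5 * (Nat.log 2 n + 1) := by
  refine (norm_hornerWord_le t x fun d hd => Nat.digits_lt_base (by norm_num) hd).trans ?_
  rcases eq_or_ne n 0 with rfl | hn
  · simp
  · rw [Nat.length_digits 4 n (by norm_num) hn]
    gcongr <;> norm_num

/-- The values `V` of the letters satisfy the equations `rels` between words. -/
def Satisfies (V : α → G) (rels : List (FreeGroup α × FreeGroup α)) : Prop :=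
  ∀ r ∈ rels, lift V r.1 = lift V r.2

theorem Satisfies.map {V : α → G} {rels : List (FreeGroup α × FreeGroup α)}
    (h : Satisfies V rels) (f : G →* H) : Satisfies (f ∘ V) rels := by
  have (w : FreeGroup α) : lift (f ∘ V) w = f (lift V w) := by
    rw [← MonoidHom.comp_apply]
    congr 1
    ext
    simp
  intro r hr
  rw [this, this, h r hr]

/-- The sum of the lengths of all words that occur in a list of relations. -/
def totalNorm [DecidableEq α] (rels : List (FreeGroup α × FreeGroup α)) : ℕ :=
  (rels.map fun r => r.1.norm + r.2.norm).sum

theorem HasBoundedPresentation.mono {G : Type} [Group G] {g g' r r' : ℕ} {L L' : ℝ}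
    (h : HasBoundedPresentation G g r L) (hg : g ≤ g') (hr : r ≤ r') (hL : L ≤ L') :
    HasBoundedPresentation G g' r' L' := by
  obtain ⟨m, π, R, hm, hπ, hR, hker, hlen⟩ := h
  exact ⟨m, π, R, hm.trans hg, hπ, hR.trans hr, hker, hlen.trans hL⟩

theorem ker_lift_eq_normalClosure {α : Type} {v : α → G} {R : Set (FreeGroup α)}
    (hR : ∀ r ∈ R, lift v r = 1)
    (hinj : ∀ (H : Type) [Group H] (V : α → H) (φ : H →* G), (∀ r ∈ R, lift V r = 1) →
      Subgroup.closure (Set.range V) = ⊤ → φ ∘ V = v → Function.Injective φ) :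
    (lift v).ker = Subgroup.normalClosure R := by
  have hmk : PresentedGroup.mk R = lift PresentedGroup.of := by
    ext
    simp [PresentedGroup.of]
  have hlift : lift v = (PresentedGroup.toGroup hR).comp (PresentedGroup.mk R) := by
    ext
    simp [hmk]
  rw [hlift, MonoidHom.ker_comp_of_injective]
  · ext
    exact PresentedGroup.mk_eq_one_iff
  · refine hinj (PresentedGroup R) PresentedGroup.of _ (fun r hr => ?_)
      (PresentedGroup.closure_range_of R) (by ext; simp)
    rw [← hmk, PresentedGroup.one_of_mem hr]

theorem HasBoundedPresentation.of_ker_eq {G : Type} [Group G] [Fintype α] [DecidableEq α]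
    (π : FreeGroup α →* G) (hπ : Function.Surjective π) (R : Finset (FreeGroup α))
    (hker : π.ker = Subgroup.normalClosure (R : Set (FreeGroup α))) :
    HasBoundedPresentation G (Fintype.card α) R.card
      (Fintype.card α + ∑ w ∈ R, w.norm : ℕ) := by
  let e := freeGroupCongr (Fintype.equivFin α)
  have he (w : FreeGroup α) : (e w).norm ≤ w.norm := by
    rw [freeGroupCongr_apply, map_eq_lift]
    exact (norm_lift_le (fun a => (norm_of _).le) w).trans_eq (mul_one _)
  refine ⟨Fintype.card α, π.comp (e.symm : _ →* FreeGroup α), R.image e, le_rfl,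
    hπ.comp e.symm.surjective, Finset.card_image_le, ?_, ?_⟩
  · rw [MonoidHom.ker_comp_mulEquiv, hker, Finset.coe_image]
    exact Subgroup.map_normalClosure _ _ e.surjective
  · norm_cast
    gcongr
    exact (Finset.sum_image_le_of_nonneg (by simp)).trans (Finset.sum_le_sum fun w _ => he w)

theorem sum_toFinset_le_sum_map {ι : Type*} [DecidableEq ι] (l : List ι) (f : ι → ℕ) :
    ∑ i ∈ l.toFinset, f i ≤ (l.map f).sum := by
  rw [Finset.sum_list_map_count]
  exact Finset.sum_le_sum fun i hi => le_smul_of_one_le_left (Nat.zero_le _)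
    (List.count_pos_iff.2 (List.mem_toFinset.1 hi))

/-- The relations are equations between words in the letters `β`, each of which abbreviates a word
in the generators. -/
theorem HasBoundedPresentation.of_words {G α β : Type} [Group G] [Fintype α] [DecidableEq α]
    [DecidableEq β] {v : α → G} (hv : Subgroup.closure (Set.range v) = ⊤)
    {words : β → FreeGroup α} {rels : List (FreeGroup β × FreeGroup β)} {B : ℕ}
    (hB : ∀ b, (words b).norm ≤ B)
    (hrels : Satisfies (fun b => lift v (words b)) rels)
    (hinj : ∀ (H : Type) [Group H] (V : α → H) (φ : H →* G),
      Satisfies (fun b => lift V (words b)) rels → Subgroup.closure (Set.range V) = ⊤ →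
      φ ∘ V = v → Function.Injective φ) :
    HasBoundedPresentation G (Fintype.card α) rels.length
      (Fintype.card α + totalNorm rels * B : ℕ) := by
  let relator (r : FreeGroup β × FreeGroup β) : FreeGroup α := lift words (r.1 * r.2⁻¹)
  have relator_norm_le (r) : (relator r).norm ≤ (r.1.norm + r.2.norm) * B := by
    refine (norm_lift_le hB _).trans ?_
    grw [FreeGroup.norm_mul_le, norm_inv_eq]
  have satisfies_iff {H : Type} [Group H] (V : α → H) :
      (∀ w ∈ (rels.map relator).toFinset, lift V w = 1) ↔
        Satisfies (fun b => lift V (words b)) rels := by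
    have (w : FreeGroup β) : lift V (lift words w) = lift (fun b => lift V (words b)) w := by
      rw [← MonoidHom.comp_apply]
      congr 1
      ext
      simp
    simp only [List.mem_toFinset, List.forall_mem_map, relator, Satisfies, this, _root_.map_mul,
      _root_.map_inv, mul_inv_eq_one]
  have h := of_ker_eq (lift v) (by rwa [← MonoidHom.range_eq_top, range_lift_eq_closure])
    (rels.map relator).toFinset (ker_lift_eq_normalClosure ((satisfies_iff v).2 hrels)
      fun H _ V φ hV => hinj H V φ ((satisfies_iff V).1 hV))
  refine h.mono le_rfl ((List.toFinset_card_le _).trans_eq (List.length_map _)) ?_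
  norm_cast
  gcongr
  calc ∑ w ∈ (rels.map relator).toFinset, w.norm
      ≤ ((rels.map relator).map FreeGroup.norm).sum := sum_toFinset_le_sum_map _ _
    _ ≤ totalNorm rels * B := by
        rw [totalNorm, ← List.sum_map_mul_right, List.map_map]
        exact List.sum_le_sum fun r _ => relator_norm_le r

theorem HasBoundedPresentation.congr {G H : Type} [Group G] [Group H] (e : G ≃* H) {g r : ℕ}
    {L : ℝ} (h : HasBoundedPresentation G g r L) : HasBoundedPresentation H g r L := by
  obtain ⟨m, π, R, hm, hπ, hR, hker, hlen⟩ := h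
  exact ⟨m, e.toMonoidHom.comp π, R, hm, e.surjective.comp hπ, hR,
    by rw [← hker]; exact MonoidHom.ker_mulEquiv_comp π e, hlen⟩

end Presentations

/-! ### Permutations of the projective line -/

section ProjectiveLine

open Equiv

variable {F : Type*}

/-- The affine map `i ↦ i + c` of the projective line `F ∪ {∞}`, with `∞ = none`. -/
def translation [AddGroup F] (c : F) : Perm (Option F) := optionCongr (Equiv.addRight c)

/-- The affine map `i ↦ v * i` of the projective line `F ∪ {∞}`. -/
def scaling [Monoid F] (v : Fˣ) : Perm (Option F) := optionCongr v.mulLeft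

section Affine

@[simp]
theorem translation_none [AddGroup F] (c : F) : translation c none = none := rfl

@[simp]
theorem translation_some [AddGroup F] (c i : F) : translation c (some i) = some (i + c) := rfl

theorem translation_pow [AddGroupWithOne F] (n : ℕ) : translation (1 : F) ^ n = translation ↑n := by
  induction n with
  | zero => ext1 (_ | i) <;> simp
  | succ n ih => rw [pow_succ', ih]; ext1 (_ | i) <;> simp [add_assoc]

@[simp]
theorem scaling_none [Monoid F] (v : Fˣ) : scaling v none = none := rfl

@[simp]
theorem scaling_some [Monoid F] (v : Fˣ) (i : F) : scaling v (some i) = some (v * i) := rfl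

theorem scaling_one [Monoid F] : scaling (1 : Fˣ) = 1 := by
  ext1 (_ | i) <;> simp

theorem scaling_mul [Monoid F] (v v' : Fˣ) : scaling (v * v') = scaling v * scaling v' := by
  ext1 (_ | i) <;> simp [mul_assoc]

theorem scaling_inv [Monoid F] (v : Fˣ) : scaling v⁻¹ = (scaling v)⁻¹ :=
  eq_inv_of_mul_eq_one_left (by rw [← scaling_mul, inv_mul_cancel, scaling_one])

theorem scaling_pow [Monoid F] (v : Fˣ) (n : ℕ) : scaling v ^ n = scaling (v ^ n) := by
  induction n with
  | zero => rw [pow_zero, pow_zero, scaling_one]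
  | succ n ih => rw [pow_succ, ih, pow_succ, scaling_mul]

theorem semiconjBy_scaling_translation [Ring F] (v : Fˣ) (c : F) :
    SemiconjBy (scaling v) (translation c) (translation (v * c)) := by
  ext1 (_ | i) <;> simp [mul_add]

end Affine

section Inversion

variable [Field F] [DecidableEq F]

private def negInvFun : Option F → Option F
  | none => some 0
  | some i => if i = 0 then none else some (-i⁻¹)

theorem negInvFun_involutive : Function.Involutive (negInvFun (F := F))
  | none => by simp [negInvFun]
  | some i => by by_cases h : i = 0 <;> simp [negInvFun, h, inv_neg]

/-- The map `i ↦ -1 / i` of the projective line `F ∪ {∞}`. -/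
def negInv : Perm (Option F) := negInvFun_involutive.toPerm

@[simp]
theorem negInv_none : negInv (none : Option F) = some 0 := rfl

@[simp]
theorem negInv_zero : negInv (some (0 : F)) = none := if_pos rfl

theorem negInv_some {i : F} (h : i ≠ 0) : negInv (some i) = some (-i⁻¹) := if_neg h

theorem negInv_mul_self : (negInv : Perm (Option F)) * negInv = 1 :=
  Equiv.ext negInvFun_involutive

theorem semiconjBy_negInv_scaling (v : Fˣ) :
    SemiconjBy negInv (scaling v) (scaling v)⁻¹ := by
  rw [← scaling_inv]
  ext1 (_ | i)
  · simp
  · rcases eq_or_ne i 0 with rfl | h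
    · simp
    · simp [negInv_some, h, mul_comm]

theorem translation_negInv_cube (v : Fˣ) :
    translation (v : F) * negInv * translation (v : F)⁻¹ * negInv * translation (v : F) * negInv =
      scaling (v ^ 2) := by
  have hv := v.ne_zero
  ext1 (_ | i)
  · simp [negInv_some]
  rcases eq_or_ne i 0 with rfl | h0
  · simp [negInv_some]
  rcases eq_or_ne (v * i) 1 with h1 | h1
  · have h : -i⁻¹ + (v : F) = 0 := by
      rw [← eq_inv_of_mul_eq_one_left h1]
      ring
    simp [negInv_some h0, h, sq, mul_assoc, h1]
  · have h1' : v * i - 1 ≠ 0 := sub_ne_zero.2 h1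
    have e1 : -i⁻¹ + (v : F) = (v * i - 1) / i := by field_simp; ring
    have e2 : -(i / (v * i - 1)) + (v : F)⁻¹ = -(v * (v * i - 1))⁻¹ := by
      grind
    have e3 : (v : F) * (v * i - 1) + v = v ^ 2 * i := by ring
    simp [negInv_some, h0, e1, h1', e2, hv, e3]

end Inversion

variable {p : ℕ} [Fact p.Prime] {K : Subgroup (Perm (Option (ZMod p)))}

theorem translation_mem (hx : translation 1 ∈ K) (i : ZMod p) : translation i ∈ K := by
  rw [← ZMod.natCast_zmod_val i, ← translation_pow]
  exact pow_mem hx _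

theorem exists_mem_apply_none (hx : translation 1 ∈ K) (hw : negInv ∈ K) :
    ∀ a, ∃ π ∈ K, π none = a
  | none => ⟨1, one_mem K, rfl⟩
  | some i => ⟨translation i * negInv, mul_mem (translation_mem hx i) hw, by simp⟩

theorem exists_mem_apply_pair (hx : translation 1 ∈ K) (hw : negInv ∈ K) {a b : Option (ZMod p)}
    (hab : a ≠ b) : ∃ π ∈ K, π none = a ∧ π (some 0) = b := by
  obtain ⟨π, hπ, rfl⟩ := exists_mem_apply_none hx hw a
  obtain ⟨_ | i, rfl⟩ := π.surjective b
  · exact absurd rfl hab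
  · exact ⟨π * translation i, mul_mem hπ (translation_mem hx i), by simp, by simp⟩

theorem exists_zpow_scaling_sq {F : Type*} [Field F] {u : Fˣ}
    (hu : ∀ v : Fˣ, v ∈ Subgroup.zpowers u) {i : F} (hi : i ≠ 0) {l : ℤ} (hl : Odd l) :
    ∃ k : ℤ, (scaling (u ^ 2) ^ k) (some 1) = some i ∨
      (scaling (u ^ 2) ^ k) (some ↑(u ^ l)) = some i := by
  have zpow_scaling (k : ℤ) : scaling (u ^ 2) ^ k = scaling (u ^ (2 * k)) := by
    rw [zpow_mul]
    cases k with
    | ofNat k => simpa using scaling_pow _ k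
    | negSucc k => simp only [zpow_negSucc, scaling_pow, scaling_inv]; rfl
  obtain ⟨m, hm⟩ := hu (Units.mk0 i hi)
  have hm' : ((u ^ m : Fˣ) : F) = i := by simpa using congr(($hm : F))
  obtain ⟨k, rfl⟩ | hodd := Int.even_or_odd m
  · exact ⟨k, .inl (by simp [zpow_scaling, ← hm', two_mul])⟩
  · obtain ⟨k, hk⟩ := hodd.sub_odd hl
    refine ⟨k, .inr ?_⟩
    rw [zpow_scaling, scaling_some, ← hm', ← Units.val_mul, ← zpow_add]
    congr 3
    lia

theorem exists_mem_apply_triple {u : (ZMod p)ˣ} (hu : ∀ v, v ∈ Subgroup.zpowers u)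
    (hx : translation 1 ∈ K) (hw : negInv ∈ K) (hh : scaling (u ^ 2) ∈ K)
    {a b c : Option (ZMod p)} (hab : a ≠ b) (hac : a ≠ c) (hbc : b ≠ c) :
    ∃ π ∈ K, π none = a ∧ π (some 0) = b ∧ (π (some 1) = c ∨ π (some ↑u) = c) := by
  obtain ⟨π, hπ, rfl, rfl⟩ := exists_mem_apply_pair hx hw hab
  obtain ⟨_ | i, rfl⟩ := π.surjective c
  · exact absurd rfl hac
  have hi : i ≠ 0 := by
    rintro rfl
    exact hbc rfl
  obtain ⟨k, hk⟩ := exists_zpow_scaling_sq hu hi odd_one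
  have fix_none : (scaling (u ^ 2) ^ k) none = none :=
    Perm.zpow_apply_eq_self_of_apply_eq_self (scaling_none _) k
  have fix_zero : (scaling (u ^ 2) ^ k) (some 0) = some 0 :=
    Perm.zpow_apply_eq_self_of_apply_eq_self (by simp) k
  refine ⟨π * scaling (u ^ 2) ^ k, mul_mem hπ (zpow_mem hh k), by simp [fix_none],
    by simp [fix_zero], ?_⟩
  simpa using hk.imp (congrArg π) (congrArg π)

end ProjectiveLine

/-! ### Generators, and the action of `PSL(2, p)` on the projective line -/

/-- The generators. The line `ZMod p ∪ {∞}` indexes star transpositions: `s` is the star of `0`, and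
`x : i ↦ i + 1`, `w : i ↦ -1 / i`, `t : i ↦ 4 * i`, `h : i ↦ u ^ 2 * i` are elements of `PSL(2, p)`.
Four blocks of the line are moved by the block permutation `θ`, by the rotation `b` of one block and
by `T`, which doubles the coordinate of one block and halves that of another. Finally `Θ` permutes
an initial segment of the line with two disjoint copies of it, and `z` is the star of one further
point. -/
inductive Gen
  | s | x | t | h | w | b | θ | T | Θ | z
  deriving DecidableEq

instance : Fintype Gen := ⟨{.s, .x, .t, .h, .w, .b, .θ, .T, .Θ, .z}, fun g => by cases g <;> simp⟩

/-- The exponents of the powers of `x` that occur in relations, where `u` is a primitive root modulo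
the prime `p`, `M` is the length of a block and `N` that of the initial segment. -/
inductive Exponent
  | p | uSq | u | uInv | half | M | N
  deriving DecidableEq

/-- The values of the exponents. -/
def Exponent.val {p : ℕ} (u : (ZMod p)ˣ) (M N : ℕ) : Exponent → ℕ
  | .p => p
  | .uSq => ((u ^ 2 : (ZMod p)ˣ) : ZMod p).val
  | .u => (u : ZMod p).val
  | .uInv => (u⁻¹ : ZMod p).val
  | .half => (2⁻¹ : ZMod p).val
  | .M => M
  | .N => N

/-- The list of relations holds. -/
def Holds {G : Type*} (rels : List (G × G)) : Prop := ∀ r ∈ rels, r.1 = r.2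

/-- The relation that `g` conjugates `a` to `b`. -/
def conjRel {G : Type*} [Mul G] (g a b : G) : G × G := (g * a, b * g)

/-- The star of the point at infinity. -/
def starInfty {G : Type*} [Group G] (s w : G) : G := w * s * w⁻¹

/-- Relations for the generators `s`, `x`, `t`, `h` and `w`; `X k` stands for the power of `x` with
exponent `k`. -/
def lineRelations {G : Type*} [Group G] (g : Gen → G) (X : Exponent → G) : List (G × G) :=
  let s := g .s
  let x := g .x
  let w := g .w
  let s' := starInfty s w
  [(X .p, 1), conjRel (g .t) x (x ^ 4), conjRel (g .h) x (X .uSq), conjRel (g .h) s s,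
    conjRel w (g .h) (g .h)⁻¹, (w * w, 1), conjRel x s' s', (s * s, 1),
    (transp s' s, transp s s'),
    conjRel (transp s' s) (x * s * x⁻¹) (x * s * x⁻¹),
    conjRel (transp s' s) (X .u * s * (X .u)⁻¹) (X .u * s * (X .u)⁻¹),
    (x * w * x * w * x * w, 1),
    (x ^ 2 * w * X .half * w * x ^ 2 * w, g .t),
    (X .u * w * X .uInv * w * X .u * w, g .h)]

section Line

open Equiv

variable {G : Type*} [Group G] {p : ℕ} {s x w h : G}

/-- The star transpositions of the projective line. -/
def lineStar (p : ℕ) (s x w : G) : Option (ZMod p) → G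
  | none => starInfty s w
  | some i => x ^ i.val * s * (x ^ i.val)⁻¹

@[simp]
theorem lineStar_zero : lineStar p s x w (some 0) = s := by
  simp [lineStar]

theorem lineStar_natCast (hx : x ^ p = 1) (n : ℕ) :
    lineStar p s x w (some n) = x ^ n * s * (x ^ n)⁻¹ := by
  simp only [lineStar, ZMod.val_natCast, ← pow_eq_pow_mod n hx]

theorem lineStar_one (hx : x ^ p = 1) : lineStar p s x w (some 1) = x * s * x⁻¹ := by
  simpa using lineStar_natCast (s := s) (w := w) hx 1

variable [Fact p.Prime]

theorem conjPermutes_x (hx : x ^ p = 1) (hxs : Commute x (starInfty s w)) :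
    ConjPermutes (lineStar p s x w) x (translation 1)
  | none => hxs
  | some i => by
    have hi : i + 1 = ((i.val + 1 : ℕ) : ZMod p) := by simp
    rw [translation_some, hi, lineStar_natCast hx, lineStar, SemiconjBy, pow_succ']
    group

theorem ConjPermutes.x_pow (hcx : ConjPermutes (lineStar p s x w) x (translation 1)) (n : ℕ) :
    ConjPermutes (lineStar p s x w) (x ^ n) (translation n) :=
  translation_pow (F := ZMod p) n ▸ hcx.pow n

theorem conjPermutes_h {v : (ZMod p)ˣ} (hx : x ^ p = 1)
    (hhx : SemiconjBy h x (x ^ (v : ZMod p).val)) (hhs : Commute h s) (hwh : SemiconjBy w h h⁻¹) :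
    ConjPermutes (lineStar p s x w) h (scaling v)
  | none => by
    have hwh' : SemiconjBy w h⁻¹ h := by simpa using hwh.inv_right
    have hws : SemiconjBy w s (starInfty s w) := by simp [starInfty, SemiconjBy]
    exact mul_right_cancel ((hwh'.mul_right hws).eq.symm.trans
      (hhs.inv_left.eq ▸ (hws.mul_right hwh').eq))
  | some i => by
    have hi : (v * i : ZMod p) = (((v : ZMod p).val * i.val : ℕ) : ZMod p) := by simp
    rw [scaling_some, hi, lineStar_natCast hx, lineStar, pow_mul]
    exact ((hhx.pow_right _).mul_right hhs).mul_right (hhx.pow_right _).inv_right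

theorem semiconjBy_w_zero : SemiconjBy w (lineStar p s x w (some 0)) (lineStar p s x w none) := by
  simp [lineStar, starInfty, SemiconjBy]

theorem semiconjBy_w_of_word (hw : w * w = 1)
    (hcx : ConjPermutes (lineStar p s x w) x (translation 1)) {v v' : ℕ} {k : G}
    (hvv' : (v' : ZMod p) = (v : ZMod p)⁻¹) (hks : Commute k s)
    (hk : x ^ v * w * x ^ v' * w * x ^ v * w = k) :
    SemiconjBy w (lineStar p s x w (some (v : ZMod p)⁻¹))
      (lineStar p s x w (some (-(v : ZMod p)))) := by
  have hx (n : ℕ) (ω) := hcx.x_pow n ω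
  have h1 : SemiconjBy (x ^ v')⁻¹ (lineStar p s x w (some (v : ZMod p)⁻¹))
      (lineStar p s x w (some 0)) := by
    simpa [← hvv'] using (hx v' (some 0)).inv_symm_left
  have h2 : SemiconjBy w⁻¹ (lineStar p s x w (some 0)) (lineStar p s x w none) := by
    rw [inv_eq_of_mul_eq_one_left hw]
    exact semiconjBy_w_zero
  have h3 : SemiconjBy (x ^ v)⁻¹ (lineStar p s x w none) (lineStar p s x w none) :=
    (hx v none).inv_symm_left
  have h4 : SemiconjBy w⁻¹ (lineStar p s x w none) (lineStar p s x w (some 0)) :=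
    semiconjBy_w_zero.inv_symm_left
  have h5 : SemiconjBy k (lineStar p s x w (some 0)) (lineStar p s x w (some 0)) := by
    rwa [lineStar_zero]
  have h6 : SemiconjBy (x ^ v)⁻¹ (lineStar p s x w (some 0))
      (lineStar p s x w (some (-(v : ZMod p)))) := by
    simpa using (hx v (some (-(v : ZMod p)))).inv_symm_left
  have hw' : w = (x ^ v)⁻¹ * (k * (w⁻¹ * ((x ^ v)⁻¹ * (w⁻¹ * (x ^ v')⁻¹)))) := by
    rw [← hk]
    group
  have := h6.mul_left (h5.mul_left (h4.mul_left (h3.mul_left (h2.mul_left h1))))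
  rwa [← hw'] at this

theorem conjPermutes_w {u : (ZMod p)ˣ} (hu : ∀ v, v ∈ Subgroup.zpowers u) (hw : w * w = 1)
    (hwh : SemiconjBy w h h⁻¹) (hch : ConjPermutes (lineStar p s x w) h (scaling (u ^ 2)))
    (h1 : SemiconjBy w (lineStar p s x w (some 1)) (lineStar p s x w (some (-1))))
    (hu' : SemiconjBy w (lineStar p s x w (some (u⁻¹ : ZMod p)))
      (lineStar p s x w (some (-(u : ZMod p))))) :
    ConjPermutes (lineStar p s x w) w negInv
  | none => by
    have := semiconjBy_w_zero (p := p) (s := s) (x := x) (w := w) |>.inv_symm_left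
    rwa [inv_eq_of_mul_eq_one_left hw] at this
  | some i => by
    rcases eq_or_ne i 0 with rfl | hi
    · simpa using semiconjBy_w_zero
    have propagate {o : Option (ZMod p)} (ho : (scaling (u ^ 2)).SameCycle o (some i)) :=
      hch.semiconjBy_of_sameCycle hch.inv hwh (semiconjBy_negInv_scaling _) ho
    obtain ⟨k, hk | hk⟩ := exists_zpow_scaling_sq hu hi (odd_neg_one (α := ℤ))
    · exact propagate ⟨k, hk⟩ (by
        rwa [negInv_some one_ne_zero, inv_one])
    · exact propagate ⟨k, hk⟩ (by
        rwa [zpow_neg_one, Units.val_inv_eq_inv_val, negInv_some (inv_ne_zero u.ne_zero), inv_inv])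

theorem isStarFamily_lineStar {u : (ZMod p)ˣ} (hu : ∀ v, v ∈ Subgroup.zpowers u)
    (hx : x ^ p = 1) (hcx : ConjPermutes (lineStar p s x w) x (translation 1))
    (hcw : ConjPermutes (lineStar p s x w) w negInv)
    (hch : ConjPermutes (lineStar p s x w) h (scaling (u ^ 2))) (hsq : s * s = 1)
    (hbraid : transp (starInfty s w) s = transp s (starInfty s w))
    (hcomm : Commute (transp (starInfty s w) s) (x * s * x⁻¹))
    (hcomm' : Commute (transp (starInfty s w) s)
      (x ^ (u : ZMod p).val * s * (x ^ (u : ZMod p).val)⁻¹)) :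
    IsStarFamily (lineStar p s x w) := by
  have mx : translation 1 ∈ inducedPerms (lineStar p s x w) := ⟨x, hcx⟩
  have mw : negInv ∈ inducedPerms (lineStar p s x w) := ⟨w, hcw⟩
  have mh : scaling (u ^ 2) ∈ inducedPerms (lineStar p s x w) := ⟨h, hch⟩
  rw [← lineStar_zero (p := p) (s := s) (x := x) (w := w)] at hsq
  refine ⟨fun a => ?_, fun a b hab => ?_, fun a b c hab hac hbc => ?_⟩
  · obtain ⟨π, hπ, rfl⟩ := exists_mem_apply_none mx mw a
    simpa using mul_self_of_mem_inducedPerms (mul_mem hπ mw) hsq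
  · obtain ⟨π, hπ, rfl, rfl⟩ := exists_mem_apply_pair mx mw hab
    exact braid_of_mem_inducedPerms hπ (by rwa [lineStar_zero])
  · obtain ⟨π, hπ, rfl, rfl, rfl | rfl⟩ := exists_mem_apply_triple hu mx mw mh hab hac hbc
    · exact commute_of_mem_inducedPerms hπ (by rwa [lineStar_one hx, lineStar_zero])
    · exact commute_of_mem_inducedPerms hπ (by rwa [lineStar_zero])

/-- The stars of the projective line form a star family on which `x` and `w` act as expected. -/
structure LineAction (p : ℕ) [Fact p.Prime] (g : Gen → G) : Prop where
  star : IsStarFamily (lineStar p (g .s) (g .x) (g .w))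
  x_pow : g .x ^ p = 1
  x : ConjPermutes (lineStar p (g .s) (g .x) (g .w)) (g .x) (translation 1)
  w : ConjPermutes (lineStar p (g .s) (g .x) (g .w)) (g .w) negInv
  h : g .h ∈ conjPermuters (lineStar p (g .s) (g .x) (g .w))
  t : g .t ∈ conjPermuters (lineStar p (g .s) (g .x) (g .w))

theorem lineAction {u : (ZMod p)ˣ} (hu : ∀ v, v ∈ Subgroup.zpowers u) {g : Gen → G} {M N : ℕ}
    (hg : Holds (lineRelations g fun k => g .x ^ k.val u M N)) : LineAction p g := by
  simp only [Holds, lineRelations, conjRel, List.forall_mem_cons, List.not_mem_nil,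
    false_imp_iff, implies_true, and_true, Exponent.val] at hg
  obtain ⟨hx, -, hhx, hhs, hwh, hw, hxs, hsq, hbraid, hcomm, hcomm', hxw, ht, hh⟩ := hg
  have cx := conjPermutes_x hx hxs
  have ch := conjPermutes_h hx hhx hhs hwh
  have seed_one := semiconjBy_w_of_word (v := 1) (v' := 1) hw cx (by rw [Nat.cast_one, inv_one])
    (.one_left _) (by simpa only [pow_one] using hxw)
  have seed_u := semiconjBy_w_of_word hw cx
    (by rw [ZMod.natCast_zmod_val, ZMod.natCast_zmod_val]) hhs hh
  have cw := conjPermutes_w hu hw hwh ch (by rwa [Nat.cast_one, inv_one] at seed_one)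
    (by rwa [ZMod.natCast_zmod_val] at seed_u)
  refine ⟨isStarFamily_lineStar hu hx cx cw ch hsq hbraid hcomm hcomm', hx, cx, cw, ⟨_, ch⟩, ?_⟩
  have mx : g .x ∈ conjPermuters (lineStar p (g .s) (g .x) (g .w)) := ⟨_, cx⟩
  have mw : g .w ∈ conjPermuters (lineStar p (g .s) (g .x) (g .w)) := ⟨_, cw⟩
  rw [← ht]
  exact mul_mem (mul_mem (mul_mem (mul_mem (mul_mem (pow_mem mx _) mw) (pow_mem mx _)) mw)
    (pow_mem mx _)) mw

end Line

/-! ### Cutting blocks off a long cycle -/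

section CutCycles

open Equiv

/-- The permutation `c` maps `f 0, f 1, …, f (L - 1)` cyclically. -/
def Rotates {α : Type*} (c : Perm α) (f : ℕ → α) (L : ℕ) : Prop :=
  ∀ r < L, c (f r) = f ((r + 1) % L)

namespace Rotates

variable {α : Type*} [DecidableEq α] {c : Perm α} {f : ℕ → α} {L L' : ℕ}

theorem swap_mul_of_ne (h : Rotates c f L) {a b : α} (hne : ∀ r < L, f r ≠ a ∧ f r ≠ b) :
    Rotates (swap a b * c) f L := fun r hr => by
  have hr' := hne _ (Nat.mod_lt (r + 1) (r.zero_le.trans_lt hr))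
  rw [Perm.mul_apply, h r hr, swap_apply_of_ne_of_ne hr'.1 hr'.2]

theorem cut_left (h : Rotates c f (L + L')) (hf : Set.InjOn f (Set.Iio (L + L'))) (hL' : 0 < L') :
    Rotates (swap (f 0) (f L) * c) f L := fun r hr => by
  rw [Perm.mul_apply, h r (by lia), Nat.mod_eq_of_lt (by lia : r + 1 < L + L')]
  rcases (Nat.succ_le_iff.2 hr).eq_or_lt with rfl | hr'
  · rw [swap_apply_right, Nat.mod_self]
  · rw [Nat.mod_eq_of_lt hr', swap_apply_of_ne_of_ne]
    · exact hf.ne (Set.mem_Iio.2 (by lia)) (Set.mem_Iio.2 (by lia)) (by lia)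
    · exact hf.ne (Set.mem_Iio.2 (by lia)) (Set.mem_Iio.2 (by lia)) (by lia)

theorem cut_right (h : Rotates c f (L + L')) (hf : Set.InjOn f (Set.Iio (L + L'))) (hL : 0 < L) :
    Rotates (swap (f 0) (f L) * c) (fun r => f (L + r)) L' := fun r hr => by
  rw [Perm.mul_apply, h _ (by lia)]
  rcases (Nat.succ_le_iff.2 hr).eq_or_lt with rfl | hr'
  · rw [add_assoc, Nat.mod_self, swap_apply_left, Nat.mod_self]; rfl
  · rw [Nat.mod_eq_of_lt hr', Nat.mod_eq_of_lt (by lia), swap_apply_of_ne_of_ne, add_assoc]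
    · exact hf.ne (Set.mem_Iio.2 (by lia)) (Set.mem_Iio.2 (by lia)) (by lia)
    · exact hf.ne (Set.mem_Iio.2 (by lia)) (Set.mem_Iio.2 (by lia)) (by lia)

end Rotates

/-- The enumeration `0, 1, …, p - 1, ∞` of the projective line. -/
def linePoint (p n : ℕ) : Option (ZMod p) := if n < p then some n else none

theorem linePoint_self (p : ℕ) : linePoint p p = none := if_neg (lt_irrefl p)

theorem linePoint_of_lt {p n : ℕ} (h : n < p) : linePoint p n = some ↑n := if_pos h

theorem injOn_linePoint (p : ℕ) : Set.InjOn (linePoint p) (Set.Iio (p + 1)) := by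
  intro m hm n hn h
  rw [Set.mem_Iio] at hm hn
  unfold linePoint at h
  split_ifs at h with hmp hnp
  · rwa [Option.some_inj, ZMod.natCast_eq_natCast_iff', Nat.mod_eq_of_lt hmp,
      Nat.mod_eq_of_lt hnp] at h
  · lia

/-- The cycle `(0 1 … p - 1 ∞)`, from whose beginning `k` cycles of length `M` are cut off. -/
def cutCycle (p M : ℕ) : ℕ → Perm (Option (ZMod p))
  | 0 => swap (some 0) none * translation 1
  | k + 1 => swap (some ↑(k * M)) (some ↑((k + 1) * M)) * cutCycle p M k

theorem rotates_cutCycle_zero {p : ℕ} (hp : 0 < p) (M : ℕ) :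
    Rotates (cutCycle p M 0) (linePoint p) (p + 1) := fun r hr => by
  rw [cutCycle, Perm.mul_apply]
  rcases Nat.lt_or_ge r p with hrp | hrp
  · rw [linePoint_of_lt hrp, translation_some, Nat.mod_eq_of_lt (by lia)]
    rcases (Nat.succ_le_iff.2 hrp).eq_or_lt with hr' | hr'
    · rw [← Nat.cast_succ, ← Nat.succ_eq_add_one, hr', ZMod.natCast_self, swap_apply_left,
        linePoint_self]
    · rw [linePoint_of_lt hr', ← Nat.cast_succ, swap_apply_of_ne_of_ne _ (Option.some_ne_none _)]
      rw [Ne, Option.some_inj, ZMod.natCast_eq_zero_iff]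
      exact Nat.not_dvd_of_pos_of_lt r.succ_pos hr'
  · obtain rfl : r = p := by lia
    rw [linePoint_self, translation_none, swap_apply_right, Nat.mod_self, linePoint_of_lt hp,
      Nat.cast_zero]

theorem rotates_cutCycle {p M : ℕ} (hM : 0 < M) (k L : ℕ) (hL : 1 < L) (h : k * M + L = p + 1) :
    (∀ j < k, Rotates (cutCycle p M k) (fun r => linePoint p (j * M + r)) M) ∧
      Rotates (cutCycle p M k) (fun r => linePoint p (k * M + r)) L := by
  induction k generalizing L with
  | zero =>
    obtain rfl : L = p + 1 := by lia
    refine ⟨by simp, ?_⟩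
    simpa using rotates_cutCycle_zero (by lia) M
  | succ k ih =>
    rw [add_mul, one_mul] at h
    obtain ⟨blocks, rest⟩ := ih (M + L) (by lia) (by lia)
    have inj : Set.InjOn (fun r => linePoint p (k * M + r)) (Set.Iio (M + L)) :=
      fun r hr r' hr' e => by
        simp only [Set.mem_Iio] at hr hr'
        have := injOn_linePoint p (Set.mem_Iio.2 (by lia)) (Set.mem_Iio.2 (by lia)) e
        lia
    have linePoint_start : linePoint p (k * M + 0) = some ↑(k * M) := linePoint_of_lt (by lia)
    have linePoint_end : linePoint p (k * M + M) = some ↑((k + 1) * M) := by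
      rw [add_mul, one_mul, linePoint_of_lt (by lia)]
    have left := rest.cut_left inj (by lia)
    have right := rest.cut_right inj hM
    rw [linePoint_start, linePoint_end] at left right
    simp only [← add_assoc] at right
    refine ⟨fun j hj => ?_, ?_⟩
    · rcases Nat.lt_succ_iff_lt_or_eq.1 hj with hj | rfl
      · refine (blocks j hj).swap_mul_of_ne fun r hr => ?_
        have : (j + 1) * M ≤ k * M := Nat.mul_le_mul_right M hj
        rw [← linePoint_start, ← linePoint_end]
        constructor <;> exact (injOn_linePoint p).ne (Set.mem_Iio.2 (by lia))
          (Set.mem_Iio.2 (by lia)) (by lia)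
      · exact left
    · rw [cutCycle]
      simpa only [add_mul, one_mul] using right

/-- The position, in the enumeration of the line, of a point of the `k` blocks of length `M` or of
the remaining `L` points. -/
def blockIndex (k M L : ℕ) : Fin k × ZMod M ⊕ ZMod L → ℕ
  | .inl (j, r) => j * M + r.val
  | .inr l => k * M + l.val

variable {k p M L : ℕ} [NeZero M] [NeZero L]

theorem blockIndex_lt (ω : Fin k × ZMod M ⊕ ZMod L) : blockIndex k M L ω < k * M + L := by
  rcases ω with ⟨j, r⟩ | l
  · have := Nat.mul_le_mul_right M (Nat.succ_le_iff.2 j.isLt)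
    have := r.val_lt
    simp only [blockIndex]
    lia
  · simpa [blockIndex] using l.val_lt

theorem blockIndex_injective : Function.Injective (blockIndex k M L) := by
  have disjoint (j : Fin k) (r : ZMod M) (l : ZMod L) : j * M + r.val ≠ k * M + l.val := by
    have := Nat.mul_le_mul_right M (Nat.succ_le_iff.2 j.isLt)
    have := r.val_lt
    lia
  rintro (⟨j, r⟩ | l) (⟨j', r'⟩ | l') h
  · have hj := congrArg (· / M) h
    have hr := congrArg (· % M) h
    simp only [blockIndex, Nat.add_comm (_ * M), Nat.add_mul_div_right _ _ (NeZero.pos M),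
      Nat.div_eq_of_lt (ZMod.val_lt _), Nat.add_mul_mod_self_right, Nat.mod_eq_of_lt
      (ZMod.val_lt _), zero_add] at hj hr
    rw [Fin.ext hj, ZMod.val_injective M hr]
  · exact absurd h (disjoint j r l')
  · exact absurd h.symm (disjoint j' r' l)
  · rw [ZMod.val_injective L (Nat.add_left_cancel h)]

/-- The line as the union of `k` blocks of length `M` and the remaining points. -/
noncomputable def blockEquiv (k p M L : ℕ) [NeZero M] [NeZero L] [NeZero p]
    (h : k * M + L = p + 1) : Fin k × ZMod M ⊕ ZMod L ≃ Option (ZMod p) :=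
  .ofBijective (linePoint p ∘ blockIndex k M L) <| by
    rw [Fintype.bijective_iff_injective_and_card]
    refine ⟨fun ω ω' h' => blockIndex_injective
      (injOn_linePoint p (h ▸ blockIndex_lt ω) (h ▸ blockIndex_lt ω') h'), ?_⟩
    simp [ZMod.card, h]

/-- The permutation of `J` blocks indexed by `R` and of further points indexed by `T` which acts by
`f j` within block `j` and by `ρ` on the further points. -/
def blockwise {J R T : Type*} : (J → Perm R) × Perm T →* Perm (J × R ⊕ T) where
  toFun f := sumCongr (prodCongrRight f.1) f.2
  map_one' := by ext1 (⟨j, r⟩ | l) <;> rfl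
  map_mul' f g := by ext1 (⟨j, r⟩ | l) <;> rfl

@[simp]
theorem blockwise_inl {J R T : Type*} (f : (J → Perm R) × Perm T) (j : J) (r : R) :
    blockwise f (.inl (j, r)) = .inl (j, f.1 j r) := rfl

@[simp]
theorem blockwise_inr {J R T : Type*} (f : (J → Perm R) × Perm T) (l : T) :
    blockwise f (.inr l) = .inr (f.2 l) := rfl

/-- The simultaneous rotation of all blocks and of the further points. -/
def rotateAll (k M L : ℕ) : Perm (Fin k × ZMod M ⊕ ZMod L) :=
  blockwise (fun _ => Equiv.addRight 1, Equiv.addRight 1)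

theorem cutCycle_blockEquiv [NeZero p] (hL : 1 < L) (h : k * M + L = p + 1)
    (ω : Fin k × ZMod M ⊕ ZMod L) :
    cutCycle p M k (blockEquiv k p M L h ω) = blockEquiv k p M L h (rotateAll k M L ω) := by
  obtain ⟨blocks, rest⟩ := rotates_cutCycle (NeZero.pos M) k L hL h
  rcases ω with ⟨j, r⟩ | l
  · refine (blocks j j.isLt _ r.val_lt).trans ?_
    simp [blockEquiv, blockIndex, rotateAll, ZMod.val_add, ZMod.val_one_eq_one_mod]
  · refine (rest _ l.val_lt).trans ?_
    simp [blockEquiv, blockIndex, rotateAll, ZMod.val_add, ZMod.val_one_eq_one_mod]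

end CutCycles

/-! ### Permutations of four blocks -/

section Blocks

open Equiv

section Orbits

variable {J R T : Type*} {f : J → Perm R} {ρ : Perm T}

theorem addRight_one_pow_apply {n : ℕ} [NeZero n] (i j : ZMod n) :
    (Equiv.addRight 1 ^ (j - i).val) i = j := by
  simp

theorem sameCycle_blockwise_inl {M : ℕ} [NeZero M] {f : J → Perm (ZMod M)} {j : J}
    (hf : f j = Equiv.addRight 1) (r r' : ZMod M) :
    (blockwise (f, ρ)).SameCycle (.inl (j, r)) (.inl (j, r')) :=
  ⟨(r' - r).val, by
    have hf' : ((f, ρ) ^ (r' - r).val).1 j = Equiv.addRight 1 ^ (r' - r).val :=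
      congrArg (· ^ (r' - r).val) hf
    rw [zpow_natCast, ← map_pow, blockwise_inl, hf', addRight_one_pow_apply]⟩

theorem sameCycle_blockwise_inr {L : ℕ} [NeZero L] (l l' : ZMod L) :
    (blockwise (f, Equiv.addRight 1)).SameCycle (.inr l) (.inr l') :=
  ⟨(l' - l).val, by
    rw [zpow_natCast, ← map_pow, blockwise_inr, Prod.pow_snd, addRight_one_pow_apply]⟩

end Orbits

/-- The permutation of the blocks by `σ`. -/
def permBlocks {J R T : Type*} : Perm J →* Perm (J × R ⊕ T) where
  toFun σ := sumCongr (prodCongr σ 1) 1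
  map_one' := by ext1 (⟨j, r⟩ | l) <;> rfl
  map_mul' σ τ := by ext1 (⟨j, r⟩ | l) <;> rfl

@[simp]
theorem permBlocks_inl {J R T : Type*} (σ : Perm J) (j : J) (r : R) :
    (permBlocks σ : Perm (J × R ⊕ T)) (.inl (j, r)) = .inl (σ j, r) := rfl

@[simp]
theorem permBlocks_inr {J R T : Type*} (σ : Perm J) (l : T) :
    (permBlocks σ : Perm (J × R ⊕ T)) (.inr l) = .inr l := rfl

theorem permBlocks_conj {J R T : Type*} (σ : Perm J) (f : J → Perm R) (ρ : Perm T) :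
    permBlocks σ * blockwise (f, ρ) * (permBlocks σ)⁻¹ = blockwise (f ∘ σ.symm, ρ) := by
  rw [mul_inv_eq_iff_eq_mul]
  ext1 (⟨j, r⟩ | l) <;> simp

variable {M L : ℕ}

theorem commute_permBlocks_rotateAll {k : ℕ} (σ : Perm (Fin k)) :
    Commute (permBlocks σ) (rotateAll k M L) := by
  ext1 (⟨j, r⟩ | l) <;> rfl

/-- The rotation of block `j`. -/
def rotateBlock (M L : ℕ) (j : Fin 4) : Perm (Fin 4 × ZMod M ⊕ ZMod L) :=
  blockwise (Pi.mulSingle j (Equiv.addRight 1), 1)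

theorem permBlocks_conj_rotateBlock (σ : Perm (Fin 4)) (j : Fin 4) :
    permBlocks σ * rotateBlock M L j * (permBlocks σ)⁻¹ = rotateBlock M L (σ j) := by
  rw [rotateBlock, permBlocks_conj, rotateBlock, Pi.mulSingle_comp_equiv, symm_symm]

theorem commute_rotateBlock_rotateAll (j : Fin 4) :
    Commute (rotateBlock M L j) (rotateAll 4 M L) := by
  refine Commute.map (Prod.ext (funext fun i => ?_) ?_) blockwise
  · rcases eq_or_ne i j with rfl | hij <;> simp [*]
  · simp

/-- Multiplication by `2`, for odd `M`. -/
def doubling (hM : Odd M) : Perm (ZMod M) :=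
  (ZMod.unitOfCoprime 2 (Nat.coprime_two_left.2 hM)).mulLeft

@[simp]
theorem doubling_apply (hM : Odd M) (r : ZMod M) : doubling hM r = 2 * r := by
  simp [doubling]

/-- The permutation that doubles the coordinate of block `0` and halves that of block `1`. -/
def doubleHalve (L : ℕ) (hM : Odd M) : Perm (Fin 4 × ZMod M ⊕ ZMod L) :=
  blockwise (![doubling hM, (doubling hM)⁻¹, 1, 1], 1)

theorem doubleHalve_conj_rotateBlock (hM : Odd M) :
    SemiconjBy (doubleHalve L hM) (rotateBlock M L 0) (rotateBlock M L 0 * rotateBlock M L 0) := by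
  ext1 (⟨j, r⟩ | l)
  · fin_cases j <;> simp [doubleHalve, rotateBlock, mul_add, one_add_one_eq_two, add_assoc]
  · rfl

/-- The 3-cycle `0 ↦ 1 ↦ 2 ↦ 0`. -/
def cycleThree : Perm (Fin 4) := swap 0 1 * swap 1 2

/-- The double transposition `(0 1)(2 3)`. -/
def doubleSwap : Perm (Fin 4) := swap 0 1 * swap 2 3

theorem coe_cycleThree_symm : ⇑cycleThree.symm = ![2, 0, 1, 3] := by decide

theorem coe_doubleSwap_symm : ⇑doubleSwap.symm = ![1, 0, 3, 2] := by decide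

theorem doubleSwap_conj_doubleHalve (hM : Odd M) :
    permBlocks doubleSwap * doubleHalve L hM * (permBlocks doubleSwap)⁻¹ * doubleHalve L hM =
      1 := by
  rw [doubleHalve, permBlocks_conj, ← map_mul, ← map_one blockwise]
  congr 1
  refine Prod.ext (funext fun i => ?_) (one_mul _)
  fin_cases i <;> simp [coe_doubleSwap_symm]

theorem doubleHalve_mul_cycleThree_conj (hM : Odd M) :
    let T := doubleHalve L hM
    let θ := permBlocks cycleThree
    T * (θ * T * θ⁻¹) * (θ * (θ * T * θ⁻¹) * θ⁻¹) = 1 := by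
  intro T θ
  simp only [T, θ]
  rw [doubleHalve, permBlocks_conj, permBlocks_conj, ← map_mul, ← map_mul, ← map_one blockwise]
  congr 1
  refine Prod.ext (funext fun i => ?_) (by simp)
  fin_cases i <;> simp [coe_cycleThree_symm]

theorem rotateBlock_mul_rotateBlock_inv_mul_rotateAll :
    (rotateBlock M L 0 * rotateBlock M L 1)⁻¹ * rotateAll 4 M L =
      blockwise (![1, 1, Equiv.addRight 1, Equiv.addRight 1], Equiv.addRight 1) := by
  rw [rotateBlock, rotateBlock, rotateAll, ← map_mul, ← map_inv, ← map_mul]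
  congr 1
  refine Prod.ext (funext fun i => ?_) (by simp)
  generalize (Equiv.addRight 1 : Perm (ZMod M)) = ρ
  fin_cases i <;> simp

theorem commute_doubleHalve_rotateAll (hM : Odd M) :
    Commute (doubleHalve L hM)
      ((rotateBlock M L 0 * rotateBlock M L 1)⁻¹ * rotateAll 4 M L) := by
  rw [rotateBlock_mul_rotateBlock_inv_mul_rotateAll]
  refine Commute.map (Prod.ext (funext fun i => ?_) (by simp)) blockwise
  fin_cases i <;> simp

theorem rotateBlocks_inv_mul_rotateAll_pow :
    ((rotateBlock M L 0 * rotateBlock M L 1 * rotateBlock M L 2 * rotateBlock M L 3)⁻¹ *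
      rotateAll 4 M L) ^ L = 1 := by
  simp only [rotateBlock, rotateAll, ← map_mul, ← map_inv, ← map_pow]
  rw [← map_one blockwise]
  congr 1
  refine Prod.ext (funext fun i => ?_) ?_
  · generalize (Equiv.addRight 1 : Perm (ZMod M)) = ρ
    fin_cases i <;> simp
  · ext l
    simp

end Blocks

/-! ### The alternating group on the blocks and the doubling of a block -/

section BlockStage

open Equiv

variable {G H : Type*} [Group G] [Group H]

/-- The word in star transpositions that acts as `cutCycle`, where `κ` shifts by the length of a
block. -/
def cutWord (s s' x κ : G) : ℕ → G
  | 0 => transp s s' * x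
  | k + 1 => transp (κ ^ k * s * (κ ^ k)⁻¹) (κ ^ (k + 1) * s * (κ ^ (k + 1))⁻¹) *
      cutWord s s' x κ k

theorem map_cutWord (f : G →* H) (s s' x κ : G) (k : ℕ) :
    f (cutWord s s' x κ k) = cutWord (f s) (f s') (f x) (f κ) k := by
  induction k with
  | zero => simp [cutWord, map_transp]
  | succ k ih => simp [cutWord, map_transp, ih]

/-- The word that exchanges block `0` with block `1` and block `2` with block `3`. -/
def doubleSwapWord (θ κ : G) : G := θ * (κ * θ * κ⁻¹)

/-- Relations for the generators `b`, `θ` and `T`, where `L` points lie outside of the blocks. -/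
def blockRelations (g : Gen → G) (X : Exponent → G) (L : ℕ) : List (G × G) :=
  let s := g .s
  let s' := starInfty s (g .w)
  let a := cutWord s s' (g .x) (X .M) 4
  let S := fun j => X .M ^ j * s * (X .M ^ j)⁻¹
  let b := g .b
  let θ := g .θ
  let T := g .T
  let D := doubleSwapWord θ (X .M)
  let b₁ := D * b * D⁻¹
  let b₂ := θ * b₁ * θ⁻¹
  let b₃ := D * b₂ * D⁻¹
  let q := (b * b₁)⁻¹ * a
  [conjRel b a a, (b * s * b⁻¹, a * s * a⁻¹), conjRel b (S 1) (S 1), conjRel b (S 2) (S 2),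
    conjRel b (S 3) (S 3), conjRel b s' s',
    conjRel θ a a, conjRel θ (S 0) (S 1), conjRel θ (S 1) (S 2), conjRel θ (S 2) (S 0),
    conjRel θ (S 3) (S 3), conjRel θ s' s', (θ ^ 3, 1), (D * D, 1),
    conjRel T b (b * b), conjRel T q q, conjRel T (S 0) (S 0), conjRel T (S 2) (S 2),
    conjRel T (S 3) (S 3), conjRel T s' s', (D * T * D⁻¹ * T, 1),
    (T * (θ * T * θ⁻¹) * (θ * (θ * T * θ⁻¹) * θ⁻¹), 1),
    (((b * b₁ * b₂ * b₃)⁻¹ * a) ^ L, 1)]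

section

variable {k p M L : ℕ} [NeZero M]

section

variable [NeZero L]

theorem blockEquiv_inl_zero [NeZero p] (h : k * M + L = p + 1) (hL : 1 < L) (j : Fin k) :
    blockEquiv k p M L h (.inl (j, 0)) = some ↑(j * M) := by
  have := Nat.mul_le_mul_right M j.isLt.le
  simpa [blockEquiv, blockIndex] using linePoint_of_lt (p := p) (n := j * M) (by lia)

theorem exists_blockEquiv_inr_eq_none [NeZero p] (h : k * M + L = p + 1) :
    ∃ l, blockEquiv k p M L h (.inr l) = none := by
  have hL := NeZero.pos L
  refine ⟨((L - 1 : ℕ) : ZMod L), ?_⟩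
  rw [← linePoint_self]
  simp only [blockEquiv, ofBijective_apply, Function.comp_apply, blockIndex,
    ZMod.val_natCast_of_lt (Nat.sub_lt hL one_pos)]
  congr 1
  lia

theorem translation_blockEquiv [NeZero p] (h : (k + 1) * M + L = p + 1) (hL : 1 < L)
    (j : Fin k) (r : ZMod M) :
    translation (M : ZMod p) (blockEquiv (k + 1) p M L h (.inl (j.castSucc, r))) =
      blockEquiv (k + 1) p M L h (.inl (j.succ, r)) := by
  have hjr := r.val_lt
  have hj : (j + 1 : ℕ) * M ≤ k * M := Nat.mul_le_mul_right M j.isLt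
  rw [add_mul, one_mul] at h hj
  simp only [blockEquiv, ofBijective_apply, Function.comp_apply, blockIndex, Fin.val_castSucc,
    Fin.val_succ, add_mul, one_mul]
  rw [linePoint_of_lt (by lia), linePoint_of_lt (by lia), translation_some]
  push_cast
  congr 1
  ring

end

theorem conjPermutes_cutWord [Fact p.Prime] {g : Gen → G} (hg : LineAction p g) (hL : 1 < L)
    (h : k * M + L = p + 1) :
    ConjPermutes (lineStar p (g .s) (g .x) (g .w))
      (cutWord (g .s) (starInfty (g .s) (g .w)) (g .x) (g .x ^ M) k) (cutCycle p M k) := by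
  have transp_eq (i j : ℕ) (hij : i < j) (hjp : j * M < p) :
      ConjPermutes (lineStar p (g .s) (g .x) (g .w))
        (transp ((g .x ^ M) ^ i * g .s * ((g .x ^ M) ^ i)⁻¹)
          ((g .x ^ M) ^ j * g .s * ((g .x ^ M) ^ j)⁻¹))
        (swap (some ↑(i * M)) (some ↑(j * M))) := by
    have hlt : i * M < j * M := Nat.mul_lt_mul_of_pos_right hij (NeZero.pos M)
    have := hg.star.conjPermutes_transp (a := some ↑(i * M)) (b := some ↑(j * M)) (by
      rw [← linePoint_of_lt (hlt.trans hjp), ← linePoint_of_lt hjp]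
      exact (injOn_linePoint p).ne (Set.mem_Iio.2 (by lia)) (Set.mem_Iio.2 (by lia)) hlt.ne)
    rwa [lineStar_natCast hg.x_pow, lineStar_natCast hg.x_pow, mul_comm i, mul_comm j, pow_mul,
      pow_mul, mul_comm M, mul_comm M] at this
  suffices ∀ i ≤ k, ConjPermutes (lineStar p (g .s) (g .x) (g .w))
      (cutWord (g .s) (starInfty (g .s) (g .w)) (g .x) (g .x ^ M) i) (cutCycle p M i) from
    this k le_rfl
  intro i hi
  induction i with
  | zero =>
    have := hg.star.conjPermutes_transp (Option.some_ne_none (0 : ZMod p))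
    rw [lineStar_zero] at this
    exact this.mul hg.x
  | succ i ih =>
    have : (i + 1) * M ≤ k * M := Nat.mul_le_mul_right M hi
    exact (transp_eq i (i + 1) i.lt_succ_self (by lia)).mul (ih (by lia))

theorem lineStar_blockEquiv_inl_zero [NeZero L] [NeZero p] {s x w : G} (hx : x ^ p = 1)
    (hL : 1 < L) (h : k * M + L = p + 1) (j : Fin k) :
    lineStar p s x w (blockEquiv k p M L h (.inl (j, 0))) =
      (x ^ M) ^ (j : ℕ) * s * ((x ^ M) ^ (j : ℕ))⁻¹ := by
  rw [blockEquiv_inl_zero h hL, lineStar_natCast hx, mul_comm (j : ℕ), pow_mul]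

end

section BlockFamily

variable {k M L : ℕ} [NeZero M] [NeZero L] {f : Fin k × ZMod M ⊕ ZMod L → G} {a g : G}

theorem conjPermutes_of_commute_rotateAll {π : Perm (Fin k × ZMod M ⊕ ZMod L)}
    (ha : ConjPermutes f a (rotateAll k M L)) (hga : Commute g a)
    (hπ : Commute π (rotateAll k M L))
    (hinl : ∀ j, SemiconjBy g (f (.inl (j, 0))) (f (π (.inl (j, 0))))) (l : ZMod L)
    (hinr : SemiconjBy g (f (.inr l)) (f (π (.inr l)))) : ConjPermutes f g π := by
  refine ha.of_sameCycle ha hga hπ ?_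
  rintro (⟨j, r⟩ | l')
  · exact ⟨_, sameCycle_blockwise_inl (by rfl) 0 r, hinl j⟩
  · exact ⟨_, sameCycle_blockwise_inr l l', hinr⟩

end BlockFamily

theorem permBlocks_cycleThree_mul_conj {R T : Type*} {τ : Perm (Fin 4 × R ⊕ T)}
    (hτ : ∀ (j : Fin 3) r, τ (.inl (j.castSucc, r)) = .inl (j.succ, r)) :
    doubleSwapWord (permBlocks cycleThree) τ = permBlocks doubleSwap := by
  have conj : τ * permBlocks cycleThree = permBlocks (swap 1 2 * swap 2 3) * τ := by
    have fix (ω) (hω : ∀ j r, ω ≠ .inl (Fin.castSucc j, r)) :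
        permBlocks (swap 1 2 * swap 2 3) (τ ω) = τ ω := by
      rcases hω' : τ ω with ⟨i, r⟩ | l
      · refine Fin.cases (fun _ => rfl) (fun j hj => ?_) i hω'
        exact absurd (τ.injective (hj.trans (hτ j r).symm)) (hω j r)
      · rfl
    ext1 (⟨i, r⟩ | l)
    · induction i using Fin.lastCases with
      | last =>
        rw [Perm.mul_apply, Perm.mul_apply, fix _ fun j r h =>
          Fin.castSucc_ne_last j (congrArg Prod.fst (Sum.inl.inj h)).symm]
        rfl
      | cast j =>
        rw [Perm.mul_apply, Perm.mul_apply, hτ, permBlocks_inl, permBlocks_inl]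
        fin_cases j
        · exact hτ 1 r
        · exact hτ 2 r
        · exact hτ 0 r
    · exact (fix (.inr l) (by simp)).symm
  rw [doubleSwapWord, conj, mul_inv_cancel_right, ← map_mul]
  congr 1
  decide

theorem conjPermutes_doubleSwapWord {R T : Type*} {f : Fin 4 × R ⊕ T → G} {θ κ : G}
    {τ : Perm (Fin 4 × R ⊕ T)}
    (hθ : ConjPermutes f θ (permBlocks cycleThree)) (hκ : ConjPermutes f κ τ)
    (hτ : ∀ (j : Fin 3) r, τ (.inl (j.castSucc, r)) = .inl (j.succ, r)) :
    ConjPermutes f (doubleSwapWord θ κ) (permBlocks doubleSwap) := by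
  rw [← permBlocks_cycleThree_mul_conj hτ]
  exact hθ.mul ((hκ.mul hθ).mul hκ.inv)

section BlockFamily

variable {M L : ℕ} [NeZero M] [NeZero L] {f : Fin 4 × ZMod M ⊕ ZMod L → G}
  {a b b₁ D T : G}

theorem conjPermutes_rotateBlock_zero (ha : ConjPermutes f a (rotateAll 4 M L)) (hba : Commute b a)
    (h0 : b * f (.inl (0, 0)) * b⁻¹ = a * f (.inl (0, 0)) * a⁻¹)
    (hsucc : ∀ j : Fin 3, Commute b (f (.inl (j.succ, 0)))) (l : ZMod L)
    (hl : Commute b (f (.inr l))) : ConjPermutes f b (rotateBlock M L 0) := by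
  refine conjPermutes_of_commute_rotateAll ha hba (commute_rotateBlock_rotateAll 0)
    (Fin.forall_fin_succ.2 ⟨?_, fun j => ?_⟩) l hl
  · exact (eq_mul_inv_iff_mul_eq.1 (h0.symm ▸ eq_mul_inv_of_mul_eq (ha (.inl (0, 0))).eq.symm)).symm
  · simpa [rotateBlock] using (hsucc j).semiconjBy

theorem conjPermutes_doubleHalve (hM : Odd M) (ha : ConjPermutes f a (rotateAll 4 M L))
    (hb : ConjPermutes f b (rotateBlock M L 0)) (hb₁ : ConjPermutes f b₁ (rotateBlock M L 1))
    (hD : ConjPermutes f D (permBlocks doubleSwap)) (hTb : SemiconjBy T b (b * b))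
    (hTq : Commute T ((b * b₁)⁻¹ * a)) (hTD : D * T * D⁻¹ * T = 1)
    (h0 : Commute T (f (.inl (0, 0)))) (h2 : Commute T (f (.inl (2, 0))))
    (h3 : Commute T (f (.inl (3, 0)))) (l : ZMod L) (hl : Commute T (f (.inr l))) :
    ConjPermutes f T (doubleHalve L hM) := by
  have hq := (hb.mul hb₁).inv.mul ha
  have hcomm := commute_doubleHalve_rotateAll (L := L) hM
  rw [rotateBlock_mul_rotateBlock_inv_mul_rotateAll] at hq hcomm
  have block0 (r) : SemiconjBy T (f (.inl (0, r))) (f (.inl (0, doubling hM r))) :=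
    hb.semiconjBy_of_sameCycle (hb.mul hb) hTb (doubleHalve_conj_rotateBlock hM)
      (sameCycle_blockwise_inl (Pi.mulSingle_eq_same 0 _) 0 r) <| by
        simpa [doubleHalve] using h0.semiconjBy
  rintro (⟨j, r⟩ | l')
  · fin_cases j
    · exact block0 r
    · have inv_apply (r) : SemiconjBy T⁻¹ (f (.inl (1, r))) (f (.inl (1, doubling hM r))) := by
        rw [← eq_inv_of_mul_eq_one_left hTD]
        exact ((hD (.inl (0, doubling hM r))).mul_left (block0 r)).mul_left
          (hD (.inl (0, r))).inv_symm_left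
      simpa [doubleHalve] using (inv_apply ((doubling hM)⁻¹ r)).inv_symm_left
    · exact hq.semiconjBy_of_sameCycle hq hTq hcomm (sameCycle_blockwise_inl (by rfl) 0 r) h2
    · exact hq.semiconjBy_of_sameCycle hq hTq hcomm (sameCycle_blockwise_inl (by rfl) 0 r) h3
  · exact hq.semiconjBy_of_sameCycle hq hTq hcomm (sameCycle_blockwise_inr l l') hl

end BlockFamily

theorem ConjPermutes.mem_conjPermuters_of_comp {Ω Ω' : Type*} {s : Ω → G} {f : Ω' ≃ Ω} {g : G}
    {ρ : Perm Ω'} (h : ConjPermutes (s ∘ f) g ρ) : g ∈ conjPermuters s :=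
  ⟨f.permCongr ρ, fun ω => by simpa using h (f.symm ω)⟩

theorem mem_conjPermuters_of_blockRelations {p : ℕ} [Fact p.Prime] {g : Gen → G}
    (hg : LineAction p g) {u : (ZMod p)ˣ} {M N L : ℕ} (hM : Odd M) (hL : 1 < L)
    (h : 4 * M + L = p + 1) (hrel : Holds (blockRelations g (fun k => g .x ^ k.val u M N) L)) :
    g .b ∈ conjPermuters (lineStar p (g .s) (g .x) (g .w)) ∧
      g .θ ∈ conjPermuters (lineStar p (g .s) (g .x) (g .w)) ∧
      g .T ∈ conjPermuters (lineStar p (g .s) (g .x) (g .w)) := by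
  have : NeZero M := ⟨hM.pos.ne'⟩
  have : NeZero L := ⟨by lia⟩
  simp only [Holds, blockRelations, conjRel, List.forall_mem_cons, List.not_mem_nil,
    false_imp_iff, implies_true, and_true, Exponent.val] at hrel
  set f := blockEquiv 4 p M L h
  set st := lineStar p (g .s) (g .x) (g .w) ∘ f with st_def
  set a := cutWord (g .s) (starInfty (g .s) (g .w)) (g .x) (g .x ^ M) 4
  set D := doubleSwapWord (g .θ) (g .x ^ M)
  set b₁ := D * g .b * D⁻¹
  obtain ⟨hba, hbs, hb1, hb2, hb3, hbi, hθa, hθ0, hθ1, hθ2, hθ3, hθi, -, -, hTb, hTq, hT0, hT2,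
    hT3, hTi, hTD, -, -⟩ := hrel
  have st_block (j : Fin 4) :
      st (.inl (j, 0)) = (g .x ^ M) ^ (j : ℕ) * g .s * ((g .x ^ M) ^ (j : ℕ))⁻¹ :=
    lineStar_blockEquiv_inl_zero hg.x_pow hL h j
  have st_zero : st (.inl (0, 0)) = g .s := by simpa using st_block 0
  obtain ⟨l, hl⟩ := exists_blockEquiv_inr_eq_none h
  have st_infty : st (.inr l) = starInfty (g .s) (g .w) := by
    rw [st_def, Function.comp_apply, hl, lineStar]
  have ha : ConjPermutes st a (rotateAll 4 M L) :=
    (conjPermutes_cutWord hg hL h).comp (cutCycle_blockEquiv hL h)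
  have hb : ConjPermutes st (g .b) (rotateBlock M L 0) := by
    refine conjPermutes_rotateBlock_zero ha hba (st_zero ▸ hbs) (fun j => ?_) l (st_infty ▸ hbi)
    rw [st_block]
    fin_cases j
    exacts [hb1, hb2, hb3]
  have hθ' : ConjPermutes st (g .θ) (permBlocks cycleThree) := by
    refine conjPermutes_of_commute_rotateAll ha hθa (commute_permBlocks_rotateAll _)
      (fun j => ?_) l (st_infty ▸ hθi)
    rw [permBlocks_inl, st_block, st_block]
    fin_cases j
    exacts [hθ0, hθ1, hθ2, hθ3]
  have hD : ConjPermutes st D (permBlocks doubleSwap) :=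
    conjPermutes_doubleSwapWord hθ' ((hg.x.x_pow M).comp (ρ := f.permCongr.symm (translation M))
      fun ω => by simp) fun j r => by
        simpa [Equiv.symm_apply_eq] using translation_blockEquiv h hL j r
  have hb₁ : ConjPermutes st b₁ (rotateBlock M L 1) := by
    have := (hD.mul hb).mul hD.inv
    rwa [permBlocks_conj_rotateBlock] at this
  have hT := conjPermutes_doubleHalve hM ha hb hb₁ hD hTb hTq hTD (st_block 0 ▸ hT0)
    (st_block 2 ▸ hT2) (st_block 3 ▸ hT3) l (st_infty ▸ hTi)
  exact ⟨hb.mem_conjPermuters_of_comp, hθ'.mem_conjPermuters_of_comp,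
    hT.mem_conjPermuters_of_comp⟩

end BlockStage

/-! ### Two further copies of an initial segment -/

section CopyStage

open Equiv

variable {G : Type*} [Group G]

section Core

variable {U W : Type*} {st : U ⊕ W → G} {y Θ : G} {ηU : Perm U} {ηW : Perm W} {u₀ : U} {w₀ : W}

/-- `Θ` fixes the stars of `W` because it conjugates `y` to an element with the same action
there. -/
theorem conjPermutes_inr_one (hy : ConjPermutes st y (sumCongr ηU ηW))
    (hW : ∀ w, ηW.SameCycle w₀ w) (hΘ : Commute Θ (st (.inr w₀)))
    (hyΘ : Commute y (Θ * y * Θ⁻¹))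
    (hyw : y * st (.inr w₀) * y⁻¹ = Θ * y * Θ⁻¹ * st (.inr w₀) * (Θ * y * Θ⁻¹)⁻¹) :
    ConjPermutes (st ∘ .inr) Θ 1 := by
  have hyW : ConjPermutes (st ∘ .inr) y ηW := hy.comp fun _ => rfl
  have hyW' : ConjPermutes (st ∘ .inr) (Θ * y * Θ⁻¹) ηW :=
    hyW.of_sameCycle hyW hyΘ.symm (Commute.refl _) fun w => ⟨w₀, hW w, by
      rw [SemiconjBy, Function.comp_apply, ← mul_inv_eq_iff_eq_mul, ← hyw]
      exact mul_inv_eq_of_eq_mul (hyW w₀).eq⟩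
  exact hyW.of_sameCycle hyW' (by simp [SemiconjBy]) (.one_left _) fun w => ⟨w₀, hW w, hΘ⟩

theorem commutesWithSwap_conj (hy : ConjPermutes st y (sumCongr ηU ηW))
    (hU : ∀ u, ηU.SameCycle u₀ u) (hΘ : ConjPermutes (st ∘ .inr) Θ 1)
    (hyΘ : Commute y (Θ * y * Θ⁻¹)) (hyu : Commute y (Θ⁻¹ * st (.inl u₀) * Θ))
    (hswap : ∀ a b, CommutesWithSwap st (Θ * st (.inl u₀) * Θ⁻¹) a b) (u : U) (a b : U ⊕ W) :
    CommutesWithSwap st (Θ * st (.inl u) * Θ⁻¹) a b := by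
  have hyU : ConjPermutes (st ∘ .inl) y ηU := hy.comp fun _ => rfl
  have hyW : ConjPermutes (st ∘ .inr) y ηW := hy.comp fun _ => rfl
  have hyu' : Commute (Θ * y * Θ⁻¹) (st (.inl u₀)) := by
    simpa [mul_assoc] using (Commute.conj_iff Θ).2 hyu
  have hy' : ConjPermutes st (Θ * y * Θ⁻¹) (sumCongr 1 ηW) := by
    rintro (u | w)
    · exact hyU.semiconjBy_of_sameCycle hyU hyΘ.symm (.one_left _) (hU u) hyu'
    · simpa using (hΘ.mul hyW).mul hΘ.inv w
  obtain ⟨i, rfl⟩ := hU u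
  have hi : SemiconjBy ((Θ * y * Θ⁻¹) ^ i) (Θ * st (.inl u₀) * Θ⁻¹)
      (Θ * st (.inl ((ηU ^ i) u₀)) * Θ⁻¹) := by
    rw [conj_zpow]
    simpa [mul_assoc] using (SemiconjBy.conj_iff (b := Θ)).2 (hyU.zpow i u₀)
  simpa using CommutesWithSwap.map (hy'.zpow i) hi
    (hswap (((sumCongr 1 ηW) ^ i)⁻¹ a) (((sumCongr 1 ηW) ^ i)⁻¹ b))

end Core

/-- The stars of `W` and of three copies of `U`, where `Θ` leads from each copy to the next. -/
def copyStar {U W : Type*} (st : U ⊕ W → G) (Θ : G) : ZMod 3 × U ⊕ W → G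
  | .inl (j, u) => Θ ^ j.val * st (.inl u) * (Θ ^ j.val)⁻¹
  | .inr w => st (.inr w)

/-- The inclusion of `U ⊕ W`, with `U` as copy `0`. -/
def firstCopy {U W : Type*} : U ⊕ W → ZMod 3 × U ⊕ W := Sum.map (Prod.mk 0) id

theorem firstCopy_injective {U W : Type*} : Function.Injective (firstCopy : U ⊕ W → _) :=
  (Prod.mk_right_injective 0).sumMap Function.injective_id

section Copies

variable {U W : Type*} {st : U ⊕ W → G} {Θ : G}

@[simp]
theorem copyStar_firstCopy (a : U ⊕ W) : copyStar st Θ (firstCopy a) = st a := by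
  rcases a with u | w <;> simp [copyStar, firstCopy]

theorem copyStar_one (u : U) : copyStar st Θ (.inl (1, u)) = Θ * st (.inl u) * Θ⁻¹ := by
  simp [copyStar, ZMod.val_one]

theorem copyStar_two (hΘ : Θ ^ 3 = 1) (u : U) :
    copyStar st Θ (.inl (2, u)) = Θ⁻¹ * st (.inl u) * Θ := by
  have hinv : Θ ^ 2 = Θ⁻¹ := eq_inv_of_mul_eq_one_left (by rwa [← pow_succ])
  rw [copyStar, show (2 : ZMod 3).val = 2 from rfl, hinv, inv_inv]

theorem conjPermutes_copyStar (hΘ : Θ ^ 3 = 1) (hW : ConjPermutes (st ∘ .inr) Θ 1) :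
    ConjPermutes (copyStar st Θ) Θ (permBlocks (Equiv.addRight 1)) := by
  rintro (⟨j, u⟩ | w)
  · have hpow : Θ ^ (j + 1).val = Θ * Θ ^ j.val := by
      rw [ZMod.val_add, ← pow_eq_pow_mod _ hΘ, ZMod.val_one, pow_succ']
    simp [SemiconjBy, copyStar, hpow, mul_assoc]
  · exact hW w

theorem inducedPerms_copyStar_eq_top [Finite U] [Finite W] (hs : IsStarFamily st)
    (hΘ : ConjPermutes (copyStar st Θ) Θ (permBlocks (Equiv.addRight 1)))
    (hswap : ∀ j ≠ 0, ∀ u a b, CommutesWithSwap st (copyStar st Θ (.inl (j, u))) a b) (w₀ : W) :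
    inducedPerms (copyStar st Θ) = ⊤ := by
  classical
  have mem_firstCopy (a b : U ⊕ W) :
      swap (firstCopy a) (firstCopy b) ∈ inducedPerms (copyStar st Θ) := by
    rcases eq_or_ne a b with rfl | hab
    · rw [swap_self]
      exact one_mem _
    refine ⟨transp (st a) (st b), fun ω => ?_⟩
    have apply_firstCopy (c) : SemiconjBy (transp (st a) (st b)) (copyStar st Θ (firstCopy c))
        (copyStar st Θ (swap (firstCopy a) (firstCopy b) (firstCopy c))) := by
      rw [← firstCopy_injective.map_swap, copyStar_firstCopy, copyStar_firstCopy]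
      exact hs.conjPermutes_transp hab c
    rcases ω with ⟨j, u⟩ | w
    · rcases eq_or_ne j 0 with rfl | hj
      · exact apply_firstCopy (.inl u)
      · have hne (c : U ⊕ W) : Sum.inl (j, u) ≠ firstCopy c := by
          rcases c with u' | w <;> simp [firstCopy, hj]
        rw [swap_apply_of_ne_of_ne (hne a) (hne b)]
        exact (hswap j hj u a b hab).symm
    · exact apply_firstCopy (.inr w)
  refine eq_top_of_swap_mem (.inr w₀) ?_
  rintro (⟨j, u⟩ | w)
  · have mΘ : permBlocks (Equiv.addRight 1) ∈ inducedPerms (copyStar st Θ) := ⟨Θ, hΘ⟩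
    have := mul_mem (mul_mem (pow_mem mΘ j.val) (mem_firstCopy (.inr w₀) (.inl u)))
      (inv_mem (pow_mem mΘ j.val))
    rw [← map_pow, Equiv.mul_swap_eq_swap_mul, mul_inv_cancel_right] at this
    simpa [firstCopy] using this
  · exact mem_firstCopy (.inr w₀) (.inr w)

theorem inducedPerms_copyStar_eq_top_of_commutesWithSwap [Finite U] [Finite W] {y : G}
    {ηU : Perm U} {ηW : Perm W} {u₀ : U} (hs : IsStarFamily st) (hΘ : Θ ^ 3 = 1)
    (hΘW : ConjPermutes (st ∘ .inr) Θ 1) (hy : ConjPermutes st y (sumCongr ηU ηW))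
    (hU : ∀ u, ηU.SameCycle u₀ u) (hyΘ : Commute y (Θ * y * Θ⁻¹))
    (hy₁ : Commute y (Θ * st (.inl u₀) * Θ⁻¹)) (hy₂ : Commute y (Θ⁻¹ * st (.inl u₀) * Θ))
    (h₁ : ∀ a b, CommutesWithSwap st (Θ * st (.inl u₀) * Θ⁻¹) a b)
    (h₂ : ∀ a b, CommutesWithSwap st (Θ⁻¹ * st (.inl u₀) * Θ) a b) (w₀ : W) :
    inducedPerms (copyStar st Θ) = ⊤ := by
  refine inducedPerms_copyStar_eq_top hs (conjPermutes_copyStar hΘ hΘW) (fun j hj u a b => ?_) w₀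
  obtain rfl | rfl : j = 1 ∨ j = 2 := by decide +revert
  · rw [copyStar_one]
    exact commutesWithSwap_conj hy hU hΘW hyΘ hy₂ h₁ u a b
  · rw [copyStar_two hΘ]
    have hyΘ' : Commute y (Θ⁻¹ * y * Θ⁻¹⁻¹) := by
      simpa [mul_assoc] using ((Commute.conj_iff Θ⁻¹).2 hyΘ).symm
    simpa only [inv_inv] using commutesWithSwap_conj hy hU hΘW.inv hyΘ' (by rwa [inv_inv])
      (by rwa [inv_inv]) u a b

theorem isStarFamily_copyStar (hs : IsStarFamily st) (htop : inducedPerms (copyStar st Θ) = ⊤)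
    {i j k : U ⊕ W} (hij : i ≠ j) (hik : i ≠ k) (hjk : j ≠ k) : IsStarFamily (copyStar st Θ) := by
  refine isStarFamily_of_inducedPerms_eq_top htop (firstCopy_injective.ne hij)
    (firstCopy_injective.ne hik) (firstCopy_injective.ne hjk) ?_ ?_ ?_ <;>
  simp only [copyStar_firstCopy]
  exacts [hs.mul_self i, hs.braid i j hij, hs.commute i j k hij hik hjk]

end Copies

/-- Relations for the generator `Θ`. -/
def copyRelations (g : Gen → G) (X : Exponent → G) : List (G × G) :=
  let s := g .s
  let s' := starInfty s (g .w)
  let x := g .x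
  let Θ := g .Θ
  let c := cutWord s s' x (X .N) 0
  let y := cutWord s s' x (X .N) 1
  let y' := Θ * y * Θ⁻¹
  let α := transp s (x * s * x⁻¹)
  let s₁ := Θ * s * Θ⁻¹
  let s₂ := Θ⁻¹ * s * Θ
  let D := doubleSwapWord Θ (X .N)
  [(Θ ^ 3, 1), conjRel Θ s' s', conjRel y y' y', (y * s' * y⁻¹, y' * s' * y'⁻¹),
    conjRel s₁ c c, conjRel s₁ α α, conjRel s₂ c c, conjRel s₂ α α, (D * D, 1)]

theorem sameCycle_prodCongrRight_addRight {J : Type*} [Subsingleton J] {M : ℕ} [NeZero M]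
    (ω ω' : J × ZMod M) : Perm.SameCycle (prodCongrRight fun _ => Equiv.addRight 1) ω ω' := by
  obtain ⟨j, r⟩ := ω
  obtain ⟨j', r'⟩ := ω'
  obtain rfl := Subsingleton.elim j j'
  have pow_apply (n : ℕ) :
      ((prodCongrRight fun _ => Equiv.addRight 1 : Perm (J × ZMod M)) ^ n) (j, r) =
        (j, (Equiv.addRight 1 ^ n) r) := by
    induction n with
    | zero => rfl
    | succ n ih => rw [pow_succ', Perm.mul_apply, ih, pow_succ']; rfl
  exact ⟨(r' - r).val, by rw [zpow_natCast, pow_apply, addRight_one_pow_apply]⟩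

theorem sameCycle_addRight_one {M : ℕ} [NeZero M] (r r' : ZMod M) :
    Perm.SameCycle (Equiv.addRight 1) r r' :=
  ⟨(r' - r).val, by rw [zpow_natCast, addRight_one_pow_apply]⟩

section Line

variable {p : ℕ} [Fact p.Prime] {g : Gen → G} {M : ℕ}

/-- The relations make `e` commute with words for the cycle `(0 1 … p - 1 ∞)` and for the
transposition `(0 1)`, which generate all permutations of the line. -/
theorem LineAction.commutesWithSwap (hg : LineAction p g) {κ e : G}
    (hc : Commute e (cutWord (g .s) (starInfty (g .s) (g .w)) (g .x) κ 0))
    (hα : Commute e (transp (g .s) (g .x * g .s * (g .x)⁻¹))) (a b : Option (ZMod p)) :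
    CommutesWithSwap (lineStar p (g .s) (g .x) (g .w)) e a b := by
  have hp : 1 < p := (Fact.out : p.Prime).one_lt
  have rot : Rotates (cutCycle p 1 0) (linePoint p) (p + 1) := rotates_cutCycle_zero hp.le 1
  have sameCycle (ω) : (cutCycle p 1 0).SameCycle (some 0) ω := by
    suffices ∀ r < p + 1, (cutCycle p 1 0).SameCycle (linePoint p 0) (linePoint p r) by
      rw [linePoint_of_lt hp.le, Nat.cast_zero] at this
      rcases ω with _ | i
      · exact linePoint_self p ▸ this p p.lt_succ_self
      · simpa [linePoint_of_lt i.val_lt] using this i.val (i.val_lt.trans p.lt_succ_self)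
    intro r hr
    induction r with
    | zero => exact .rfl
    | succ r ih =>
      rw [← Nat.mod_eq_of_lt hr, ← rot r (by lia)]
      exact (ih (by lia)).apply_right
  have apply_zero : cutCycle p 1 0 (some 0) = some 1 := by
    have := rot 0 p.succ_pos
    rwa [zero_add, Nat.mod_eq_of_lt (by lia), linePoint_of_lt hp.le, linePoint_of_lt hp,
      Nat.cast_zero, Nat.cast_one] at this
  have from_zero (b) : CommutesWithSwap (lineStar p (g .s) (g .x) (g .w)) e (some 0) b :=
    .of_sameCycle hg.star
      (conjPermutes_cutWord hg (M := 1) (k := 0) (L := p + 1) (by lia) (by simp)) hc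
      (fun _ => by rwa [apply_zero, lineStar_zero, lineStar_one hg.x_pow]) (sameCycle b)
  exact .trans hg.star (.symm hg.star (from_zero a)) (from_zero b)

theorem commute_cutWord_one (hx : g .x ^ p = 1) (hM : 0 < M) (hMp : M < p) {e : G}
    (hc : Commute e (cutWord (g .s) (starInfty (g .s) (g .w)) (g .x) (g .x ^ M) 0))
    (h : ∀ a b, CommutesWithSwap (lineStar p (g .s) (g .x) (g .w)) e a b) :
    Commute e (cutWord (g .s) (starInfty (g .s) (g .w)) (g .x) (g .x ^ M) 1) := by
  refine .mul_right ?_ hc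
  have hne : some (0 : ZMod p) ≠ some ↑M := by
    rw [Ne, Option.some_inj, eq_comm, ZMod.natCast_eq_zero_iff]
    exact Nat.not_dvd_of_pos_of_lt hM hMp
  simpa [lineStar_natCast hx] using h _ _ hne

variable [NeZero M] {u : (ZMod p)ˣ} {M' L : ℕ} [NeZero L]

theorem copyAction (hg : LineAction p g) (hL : 1 < L) (h : 1 * M + L = p + 1)
    (hrel : Holds (copyRelations g fun k => g .x ^ k.val u M' M)) :
    let st := lineStar p (g .s) (g .x) (g .w) ∘ blockEquiv 1 p M L h
    IsStarFamily (copyStar st (g .Θ)) ∧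
      ConjPermutes (copyStar st (g .Θ)) (g .Θ) (permBlocks (Equiv.addRight 1)) := by
  intro st
  simp only [Holds, copyRelations, conjRel, List.forall_mem_cons, List.not_mem_nil,
    false_imp_iff, implies_true, and_true, Exponent.val] at hrel
  set f := blockEquiv 1 p M L h
  set c := cutWord (g .s) (starInfty (g .s) (g .w)) (g .x) (g .x ^ M) 0
  set y := cutWord (g .s) (starInfty (g .s) (g .w)) (g .x) (g .x ^ M) 1
  obtain ⟨hΘ, hΘi, hyΘ, hyi, hc₁, hα₁, hc₂, hα₂, -⟩ := hrel
  obtain ⟨l, hl⟩ := exists_blockEquiv_inr_eq_none h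
  have st_zero : st (.inl (0, 0)) = g .s := by
    simp [st, blockEquiv_inl_zero h hL]
  have st_infty : st (.inr l) = starInfty (g .s) (g .w) := by
    simp [st, hl, lineStar]
  have hy : ConjPermutes st y
      (sumCongr (prodCongrRight fun _ => Equiv.addRight 1) (Equiv.addRight 1)) :=
    (conjPermutes_cutWord hg hL h).comp (cutCycle_blockEquiv hL h)
  have hΘW : ConjPermutes (st ∘ .inr) (g .Θ) 1 :=
    conjPermutes_inr_one hy (sameCycle_addRight_one l) (st_infty ▸ hΘi) hyΘ (st_infty ▸ hyi)
  refine ⟨?_, conjPermutes_copyStar hΘ hΘW⟩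
  have hst : IsStarFamily st := hg.star.comp f.injective
  have commutesWithSwap {e} (he : ∀ a b, CommutesWithSwap (lineStar p (g .s) (g .x) (g .w)) e a b)
      (a b) : CommutesWithSwap st e a b := fun hab => he _ _ (f.injective.ne hab)
  have swap₁ := hg.commutesWithSwap hc₁ hα₁
  have swap₂ := hg.commutesWithSwap hc₂ hα₂
  have hMp : M < p := by lia
  have htop : inducedPerms (copyStar st (g .Θ)) = ⊤ := by
    refine inducedPerms_copyStar_eq_top_of_commutesWithSwap hst hΘ hΘW hy
      (sameCycle_prodCongrRight_addRight (0, 0)) hyΘ ?_ ?_ ?_ ?_ l <;> rw [st_zero]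
    exacts [(commute_cutWord_one hg.x_pow (NeZero.pos M) hMp hc₁ swap₁).symm,
      (commute_cutWord_one hg.x_pow (NeZero.pos M) hMp hc₂ swap₂).symm,
      commutesWithSwap swap₁, commutesWithSwap swap₂]
  exact isStarFamily_copyStar hst htop (i := f.symm (some 0)) (j := f.symm (some 1))
    (k := f.symm none) (by simp) (by simp) (by simp)

end Line

end CopyStage

/-! ### One further point -/

section ExtraStar

open Equiv

variable {G : Type*} [Group G]

theorem IsStarFamily.sumElim {Ω E : Type*} [Subsingleton E] {s : Ω → G} (hs : IsStarFamily s)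
    {z : G} {o : Ω} (hsq : E → z * z = 1) (hbraid : E → transp z (s o) = transp (s o) z)
    (hcomm : ∀ a b, CommutesWithSwap s z a b) : IsStarFamily (Sum.elim s fun _ : E => z) := by
  have braid (e : E) (a) : transp z (s a) = transp (s a) z := by
    rcases eq_or_ne o a with rfl | ha
    · exact hbraid e
    · classical
      have hz := (hcomm o a ha).symm.semiconjBy
      have hoa := hs.conjPermutes_transp ha o
      rw [swap_apply_left] at hoa
      have h := (semiconjBy_transp hz hoa).eq
      rw [hbraid e, (semiconjBy_transp hoa hz).eq] at h
      exact (mul_right_cancel h).symm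
  have commute (a b) (hab : a ≠ b) : Commute (transp (s a) z) (s b) := by
    have h := (Commute.conj_iff (s a)).2 (hcomm a b hab)
    rwa [hs.inv_eq, transp, mul_assoc (s a) (s b), ← mul_assoc (s a) (s a), hs.mul_self, one_mul,
      mul_assoc (s b), hs.mul_self, mul_one] at h
  refine ⟨?_, ?_, ?_⟩
  · rintro (a | e)
    exacts [hs.mul_self a, hsq e]
  · rintro (a | e) (b | e') hab
    · exact hs.braid a b (ne_of_apply_ne _ hab)
    · exact (braid e' a).symm
    · exact braid e b
    · exact absurd (congrArg Sum.inr (Subsingleton.elim e e')) hab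
  · rintro (a | e) (b | e') (c | e'') hab hac hbc
    · exact hs.commute a b c (ne_of_apply_ne _ hab) (ne_of_apply_ne _ hac) (ne_of_apply_ne _ hbc)
    · exact (hcomm a b (ne_of_apply_ne _ hab)).symm
    · exact commute a c (ne_of_apply_ne _ hac)
    · exact absurd (congrArg Sum.inr (Subsingleton.elim e' e'')) hbc
    · exact (braid e b).symm ▸ commute b c (ne_of_apply_ne _ hbc)
    · exact absurd (congrArg Sum.inr (Subsingleton.elim e e'')) hac
    · exact absurd (congrArg Sum.inr (Subsingleton.elim e e')) hab
    · exact absurd (congrArg Sum.inr (Subsingleton.elim e e')) hab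

theorem commutesWithSwap_copyStar {U W : Type*} {st : U ⊕ W → G} {Θ z : G}
    (hs : IsStarFamily (copyStar st Θ))
    (hΘ : ConjPermutes (copyStar st Θ) Θ (permBlocks (Equiv.addRight 1))) (hz : Commute z Θ)
    (h : ∀ a b, CommutesWithSwap st z a b) (w₀ : W) (a b : ZMod 3 × U ⊕ W) :
    CommutesWithSwap (copyStar st Θ) z a b := by
  have apply_firstCopy (a b) : CommutesWithSwap (copyStar st Θ) z (firstCopy a) (firstCopy b) := by
    intro hab
    rw [copyStar_firstCopy, copyStar_firstCopy]
    exact h a b (ne_of_apply_ne _ hab)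
  have from_base : ∀ a, CommutesWithSwap (copyStar st Θ) z (.inr w₀) a := by
    rintro (⟨j, u⟩ | w)
    · have := CommutesWithSwap.map (hΘ.pow j.val) (hz.symm.pow_left _).semiconjBy
        (apply_firstCopy (.inr w₀) (.inl u))
      rw [← map_pow] at this
      simpa [firstCopy] using this
    · exact apply_firstCopy (.inr w₀) (.inr w)
  exact .trans hs (.symm hs (from_base a)) (from_base b)

/-- Relations for the generator `z`, which is the star of a further point if `e = 1` and trivial if
`e = 0`. -/
def extraRelations (g : Gen → G) (X : Exponent → G) (e : ℕ) : List (G × G) :=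
  let s := g .s
  let s' := starInfty s (g .w)
  let c := cutWord s s' (g .x) (X .N) 0
  let α := transp s (g .x * s * (g .x)⁻¹)
  let z := g .z
  [(z ^ (e + 1), 1), ((z * s') ^ (3 * e), 1), conjRel z c c, conjRel z α α,
    conjRel z (g .Θ) (g .Θ)]

end ExtraStar

/-! ### All relations, and the subgroup generated by the stars -/

section AllRelations

open Equiv

variable {G H : Type*} [Group G] [Group H]

/-- The complete list of relations. -/
def allRelations (g : Gen → G) (X : Exponent → G) (L e : ℕ) : List (G × G) :=
  lineRelations g X ++ blockRelations g X L ++ copyRelations g X ++ extraRelations g X e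

theorem holds_allRelations {g : Gen → G} {X : Exponent → G} {L e : ℕ} :
    Holds (allRelations g X L e) ↔ Holds (lineRelations g X) ∧ Holds (blockRelations g X L) ∧
      Holds (copyRelations g X) ∧ Holds (extraRelations g X e) := by
  simp only [Holds, allRelations, List.forall_mem_append, and_assoc]

theorem map_lineRelations (f : G →* H) (g : Gen → G) (X : Exponent → G) :
    (lineRelations g X).map (Prod.map f f) = lineRelations (f ∘ g) (f ∘ X) := by
  simp [lineRelations, conjRel, starInfty, transp]

theorem map_blockRelations (f : G →* H) (g : Gen → G) (X : Exponent → G) (L : ℕ) :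
    (blockRelations g X L).map (Prod.map f f) = blockRelations (f ∘ g) (f ∘ X) L := by
  simp [blockRelations, conjRel, starInfty, map_cutWord, doubleSwapWord]

theorem map_copyRelations (f : G →* H) (g : Gen → G) (X : Exponent → G) :
    (copyRelations g X).map (Prod.map f f) = copyRelations (f ∘ g) (f ∘ X) := by
  simp [copyRelations, conjRel, starInfty, map_cutWord, map_transp, doubleSwapWord]

theorem map_extraRelations (f : G →* H) (g : Gen → G) (X : Exponent → G) (e : ℕ) :
    (extraRelations g X e).map (Prod.map f f) = extraRelations (f ∘ g) (f ∘ X) e := by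
  simp [extraRelations, conjRel, starInfty, map_cutWord, map_transp]

theorem map_allRelations (f : G →* H) (g : Gen → G) (X : Exponent → G) (L e : ℕ) :
    (allRelations g X L e).map (Prod.map f f) = allRelations (f ∘ g) (f ∘ X) L e := by
  simp only [allRelations, List.map_append, map_lineRelations, map_blockRelations,
    map_copyRelations, map_extraRelations]

theorem holds_map_iff {f : G →* H} (hf : Function.Injective f) {rels : List (G × G)} :
    Holds (rels.map (Prod.map f f)) ↔ Holds rels := by
  simp only [Holds, List.forall_mem_map, Prod.map, hf.eq_iff]

theorem Holds.map {rels : List (G × G)} (h : Holds rels) (f : G →* H) :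
    Holds (rels.map (Prod.map f f)) :=
  List.forall_mem_map.2 fun r hr => congrArg f (h r hr)

variable {p : ℕ} {u : (ZMod p)ˣ} {M N L : ℕ}

theorem eq_one_of_pow_eq_one {a : G} {m n : ℕ} (hmn : m.Coprime n) (hm : a ^ m = 1)
    (hn : a ^ n = 1) : a = 1 := by
  simpa [hmn] using pow_gcd_eq_one.2 ⟨hm, hn⟩

theorem eq_one_of_star_eq_one (hpL : p.Coprime L) {g : Gen → G} (hs : g .s = 1)
    (hline : Holds (lineRelations g fun k => g .x ^ k.val u M N))
    (hblock : Holds (blockRelations g (fun k => g .x ^ k.val u M N) L)) {i : Gen} (hiΘ : i ≠ .Θ)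
    (hiz : i ≠ .z) : g i = 1 := by
  simp only [Holds, lineRelations, blockRelations, conjRel, List.forall_mem_cons,
    List.not_mem_nil, false_imp_iff, implies_true, and_true, Exponent.val, hs, starInfty, cutWord,
    transp, doubleSwapWord, mul_one, mul_inv_cancel, one_mul] at hline hblock
  obtain ⟨hx, -, -, -, -, hw, -, -, -, -, -, hxw, ht, hh⟩ := hline
  obtain ⟨-, -, -, -, -, -, hθx, -, -, -, -, -, hθ, hD, hTb, -, -, -, -, -, hTD, hTθ, hL⟩ := hblock
  have hκθ : g .x ^ M * g .θ * (g .x ^ M)⁻¹ = g .θ := by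
    rw [((show Commute (g .θ) (g .x) from hθx).pow_right M).symm.eq, mul_inv_cancel_right]
  have θ_eq : g .θ = 1 :=
    eq_one_of_pow_eq_one (by decide : Nat.Coprime 3 4) hθ (by
      simpa [pow_succ, hκθ, mul_assoc] using hD)
  have T_eq : g .T = 1 :=
    eq_one_of_pow_eq_one (by decide : Nat.Coprime 2 3) (by simpa [pow_succ, θ_eq] using hTD)
      (by simpa [pow_succ, θ_eq] using hTθ)
  have b_eq : g .b = 1 := by
    rwa [T_eq, one_mul, mul_one, eq_comm, mul_eq_right] at hTb
  have x_eq : g .x = 1 := eq_one_of_pow_eq_one hpL hx (by simpa [b_eq, θ_eq] using hL)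
  have w_eq : g .w = 1 :=
    eq_one_of_pow_eq_one (by decide : Nat.Coprime 2 3) (by simpa [pow_succ] using hw)
      (by simpa [pow_succ, x_eq] using hxw)
  cases i
  case t => simpa [x_eq, w_eq] using ht.symm
  case h => simpa [x_eq, w_eq] using hh.symm
  all_goals first | assumption | contradiction

theorem Θ_eq_one_of_x_eq_one {g : Gen → G} (hx : g .x = 1)
    (hcopy : Holds (copyRelations g fun k => g .x ^ k.val u M N)) : g .Θ = 1 := by
  simp only [Holds, copyRelations, doubleSwapWord, List.forall_mem_cons, hx, one_pow, one_mul,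
    inv_one, mul_one] at hcopy
  obtain ⟨hΘ, -, -, -, -, -, -, -, hD, -⟩ := hcopy
  exact eq_one_of_pow_eq_one (by decide : Nat.Coprime 3 4) hΘ (by
    simpa [pow_succ, mul_assoc] using hD)

section Line

variable [Fact p.Prime]

theorem mem_closure_range_lineStar (hpL : p.Coprime L) (hM : Odd M) (hL : 1 < L)
    (h : 4 * M + L = p + 1) {g : Gen → G} (hg : LineAction p g)
    (hline : Holds (lineRelations g fun k => g .x ^ k.val u M N))
    (hblock : Holds (blockRelations g (fun k => g .x ^ k.val u M N) L)) {i : Gen} (hiΘ : i ≠ .Θ)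
    (hiz : i ≠ .z) :
    g i ∈ Subgroup.closure (Set.range (lineStar p (g .s) (g .x) (g .w))) := by
  set S := Subgroup.closure (Set.range (lineStar p (g .s) (g .x) (g .w)))
  obtain ⟨hb, hθ, hT⟩ := mem_conjPermuters_of_blockRelations hg hM hL h hblock
  have s_mem : g .s ∈ S := Subgroup.subset_closure ⟨some 0, lineStar_zero⟩
  let g₁ : Gen → G := Function.update (Function.update g .Θ 1) .z 1
  have mem_normalizer (j) : g₁ j ∈ Subgroup.normalizer (S : Set G) := by
    cases j
    case s => exact Subgroup.le_normalizer s_mem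
    case Θ | z => exact one_mem _
    all_goals refine conjPermuters_le_normalizer ?_
    exacts [⟨_, hg.x⟩, hg.t, hg.h, ⟨_, hg.w⟩, hb, hθ, hT]
  let g₂ (j : Gen) : Subgroup.normalizer (S : Set G) := ⟨g₁ j, mem_normalizer j⟩
  have hline₂ : Holds (lineRelations g₂ fun k => g₂ .x ^ k.val u M N) := by
    rw [← holds_map_iff (Subgroup.subtype_injective _), map_lineRelations]
    exact hline
  have hblock₂ : Holds (blockRelations g₂ (fun k => g₂ .x ^ k.val u M N) L) := by
    rw [← holds_map_iff (Subgroup.subtype_injective _), map_blockRelations]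
    exact hblock
  let f := QuotientGroup.mk' (S.subgroupOf (Subgroup.normalizer (S : Set G)))
  have h_one : f (g₂ i) = 1 := eq_one_of_star_eq_one (g := f ∘ g₂) (u := u) (M := M) (N := N) hpL
    ((QuotientGroup.eq_one_iff _).2 s_mem) (map_lineRelations f _ _ ▸ hline₂.map f)
    (map_blockRelations f _ _ _ ▸ hblock₂.map f) hiΘ hiz
  have hi : g₁ i = g i := by simp [g₁, hiΘ, hiz]
  have : g₁ i ∈ S := (QuotientGroup.eq_one_iff (g₂ i)).1 h_one
  rwa [hi] at this

variable [NeZero N] {L' : ℕ} [NeZero L'] {e : ℕ}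

/-- The stars of all points: of the line, of the copies of its initial segment and, if `e = 1`, of
the further point. -/
noncomputable def allStars (h' : 1 * N + L' = p + 1) (e : ℕ) (g : Gen → G) :
    (ZMod 3 × (Fin 1 × ZMod N) ⊕ ZMod L') ⊕ Fin e → G :=
  Sum.elim (copyStar (lineStar p (g .s) (g .x) (g .w) ∘ blockEquiv 1 p N L' h') (g .Θ))
    fun _ => g .z

theorem range_lineStar_subset (h' : 1 * N + L' = p + 1) (g : Gen → G) :
    Set.range (lineStar p (g .s) (g .x) (g .w)) ⊆ Set.range (allStars h' e g) := by
  rintro _ ⟨ω, rfl⟩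
  exact ⟨.inl (firstCopy ((blockEquiv 1 p N L' h').symm ω)), by simp [allStars]⟩

theorem isStarFamily_allStars (he : e ≤ 1) (hL' : 1 < L') (h' : 1 * N + L' = p + 1) {g : Gen → G}
    (hg : LineAction p g) (hcopy : Holds (copyRelations g fun k => g .x ^ k.val u M N))
    (hextra : Holds (extraRelations g (fun k => g .x ^ k.val u M N) e)) :
    IsStarFamily (allStars h' e g) := by
  have : Subsingleton (Fin e) := Fin.subsingleton_iff_le_one.2 he
  obtain ⟨hstar, hΘ⟩ := copyAction hg hL' h' hcopy
  simp only [Holds, extraRelations, conjRel, List.forall_mem_cons, List.not_mem_nil,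
    false_imp_iff, implies_true, and_true, Exponent.val] at hextra
  obtain ⟨hz, hzs, hzc, hzα, hzΘ⟩ := hextra
  have he' (i : Fin e) : e = 1 := he.antisymm i.pos
  obtain ⟨l, hl⟩ := exists_blockEquiv_inr_eq_none h'
  have swap_line (a b) := hg.commutesWithSwap hzc hzα (blockEquiv 1 p N L' h' a)
    (blockEquiv 1 p N L' h' b)
  have swap_all := commutesWithSwap_copyStar hstar hΘ hzΘ
    (fun a b hab => swap_line a b ((blockEquiv 1 p N L' h').injective.ne hab)) l
  refine hstar.sumElim (o := .inr l) (fun i => ?_) (fun i => ?_) swap_all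
  · simpa [he' i, pow_succ] using hz
  · have hzz : g .z * g .z = 1 := by simpa [he' i, pow_succ] using hz
    have hss := hstar.mul_self (.inr l)
    have hs : copyStar (lineStar p (g .s) (g .x) (g .w) ∘ blockEquiv 1 p N L' h') (g .Θ) (.inr l) =
        starInfty (g .s) (g .w) := by simp [copyStar, hl, lineStar]
    rw [hs] at hss ⊢
    simp only [he' i, mul_one, pow_succ, pow_zero, one_mul] at hzs
    rw [transp, transp]
    grind

theorem closure_range_allStars (he : e ≤ 1) (hpL : p.Coprime L) (hM : Odd M) (hL : 1 < L)
    (h : 4 * M + L = p + 1) (hL' : 1 < L') (h' : 1 * N + L' = p + 1) {g : Gen → G}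
    (hg : LineAction p g) (htop : Subgroup.closure (Set.range g) = ⊤)
    (hrel : Holds (allRelations g (fun k => g .x ^ k.val u M N) L e)) :
    Subgroup.closure (Set.range (allStars h' e g)) = ⊤ := by
  obtain ⟨hline, hblock, hcopy, hextra⟩ := holds_allRelations.1 hrel
  set K := Subgroup.closure (Set.range (allStars h' e g))
  have line_mem {i} (hiΘ : i ≠ .Θ) (hiz : i ≠ .z) : g i ∈ K :=
    Subgroup.closure_mono (range_lineStar_subset h' g)
      (mem_closure_range_lineStar hpL hM hL h hg hline hblock hiΘ hiz)
  have z_mem : g .z ∈ K := by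
    rcases e.eq_zero_or_pos with rfl | he
    · have : g .z = 1 := by simpa using hextra _ (List.mem_cons_self)
      exact this ▸ one_mem K
    · exact Subgroup.subset_closure ⟨.inr ⟨0, he⟩, rfl⟩
  have Θ_conj : ConjPermutes (allStars h' e g) (g .Θ)
      (sumCongr (permBlocks (Equiv.addRight 1)) 1) := by
    rintro (ω | _)
    · exact (copyAction hg hL' h' hcopy).2 ω
    · exact (hextra (g .z * g .Θ, g .Θ * g .z) (by simp [extraRelations, conjRel])).symm
  have normal : K.Normal := by
    rw [← Subgroup.normalizer_eq_top_iff, eq_top_iff, ← htop, Subgroup.closure_le]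
    rintro _ ⟨i, rfl⟩
    cases i
    case Θ => exact conjPermuters_le_normalizer ⟨_, Θ_conj⟩
    case z => exact Subgroup.le_normalizer z_mem
    all_goals exact Subgroup.le_normalizer (line_mem (by decide) (by decide))
  have Θ_mem : g .Θ ∈ K := (QuotientGroup.eq_one_iff _).1 <|
    Θ_eq_one_of_x_eq_one (g := QuotientGroup.mk' K ∘ g) (u := u) (M := M) (N := N)
      ((QuotientGroup.eq_one_iff _).2 (line_mem (i := .x) (by decide) (by decide)))
      (map_copyRelations (QuotientGroup.mk' K) _ _ ▸ hcopy.map (QuotientGroup.mk' K))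
  rw [eq_top_iff, ← htop, Subgroup.closure_le]
  rintro _ ⟨i, rfl⟩
  cases i
  case Θ => exact Θ_mem
  case z => exact z_mem
  all_goals exact line_mem (by decide) (by decide)

end Line

end AllRelations

/-! ### The relations hold in the symmetric group -/

section Model

open Equiv

/-- A copy of the symmetric group on `Ω ∪ {∗}` in `G`, consisting of the star transpositions
`st a = (∗ a)` and of the permutations `ι π` of `Ω`. -/
structure StarModel {Ω G : Type*} [DecidableEq Ω] [Group G] (st : Ω → G) (ι : Perm Ω →* G) :
    Prop where
  mul_self : ∀ a, st a * st a = 1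
  conj : ∀ π, ConjPermutes st (ι π) π
  transp : ∀ a b, a ≠ b → transp (st a) (st b) = ι (swap a b)

theorem viaEmbeddingHom_eq_of_apply {Ω Ω' : Type*} {e : Ω ↪ Ω'} {σ : Perm Ω} {τ : Perm Ω'}
    (h : ∀ a, τ (e a) = e (σ a)) (h' : ∀ b ∉ Set.range e, τ b = b) :
    Perm.viaEmbeddingHom e σ = τ := by
  ext1 b
  rw [Perm.viaEmbeddingHom_apply]
  by_cases hb : b ∈ Set.range e
  · obtain ⟨a, rfl⟩ := hb
    rw [Perm.viaEmbedding_apply, h]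
  · rw [Perm.viaEmbedding_apply_of_notMem _ _ _ hb, h' b hb]

theorem viaEmbeddingHom_swap {Ω Ω' : Type*} [DecidableEq Ω] [DecidableEq Ω'] (e : Ω ↪ Ω')
    (a b : Ω) : Perm.viaEmbeddingHom e (swap a b) = swap (e a) (e b) :=
  viaEmbeddingHom_eq_of_apply (fun _ => (e.injective.map_swap _ _ _).symm) fun _ hc =>
    swap_apply_of_ne_of_ne (fun h => hc ⟨a, h.symm⟩) fun h => hc ⟨b, h.symm⟩

theorem starModel_option (Ω : Type*) [DecidableEq Ω] :
    StarModel (fun a : Ω => swap none (some a)) (Perm.viaEmbeddingHom .some) where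
  mul_self a := swap_mul_self _ _
  conj π a := by
    rw [SemiconjBy, mul_swap_eq_swap_mul, Perm.viaEmbeddingHom_apply]
    congr 2
    · exact Perm.viaEmbedding_apply_of_notMem _ _ _ (by simp)
    · exact Perm.viaEmbedding_apply π .some a
  transp a b hab := by
    rw [viaEmbeddingHom_swap, transp, swap_comm none (some b)]
    exact swap_mul_swap_mul_swap (by simp) (by simpa using hab.symm)

namespace StarModel

variable {Ω Ω' G : Type*} [DecidableEq Ω] [DecidableEq Ω'] [Group G] {st : Ω → G} {ι : Perm Ω →* G}

theorem comp (hm : StarModel st ι) (e : Ω' ↪ Ω) :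
    StarModel (st ∘ e) (ι.comp (Perm.viaEmbeddingHom e)) where
  mul_self a := hm.mul_self (e a)
  conj π := (hm.conj _).comp fun a => Perm.viaEmbedding_apply π e a
  transp a b hab := by
    simpa [viaEmbeddingHom_swap] using hm.transp _ _ (e.injective.ne hab)

theorem conj_apply (hm : StarModel st ι) (π : Perm Ω) (a : Ω) :
    ι π * st a * (ι π)⁻¹ = st (π a) :=
  mul_inv_eq_of_eq_mul (hm.conj π a).eq

theorem commute_of_apply_eq (hm : StarModel st ι) {π : Perm Ω} {a : Ω} (h : π a = a) :
    Commute (ι π) (st a) := by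
  have := hm.conj π a
  rwa [h] at this

end StarModel

section Line

variable {p : ℕ} {G : Type*} [Group G]

/-- The generators `s`, `x` and `w` take their intended values in a copy of the symmetric group. -/
structure LineModel [Fact p.Prime] (g : Gen → G) (st : Option (ZMod p) → G)
    (ι : Perm (Option (ZMod p)) →* G) : Prop extends StarModel st ι where
  s : g .s = st (some 0)
  x : g .x = ι (translation 1)
  w : g .w = ι negInv

variable [Fact p.Prime] {g : Gen → G} {st : Option (ZMod p) → G} {ι : Perm (Option (ZMod p)) →* G}

namespace LineModel

theorem x_pow (hm : LineModel g st ι) (n : ℕ) : g .x ^ n = ι (translation n) := by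
  rw [hm.x, ← map_pow, translation_pow]

theorem x_pow_val (hm : LineModel g st ι) (c : ZMod p) : g .x ^ c.val = ι (translation c) := by
  rw [hm.x_pow, ZMod.natCast_zmod_val]

theorem conj_x_pow (hm : LineModel g st ι) (n : ℕ) :
    g .x ^ n * g .s * (g .x ^ n)⁻¹ = st (some n) := by
  rw [hm.x_pow, hm.s, hm.conj_apply, translation_some, zero_add]

theorem conj_x (hm : LineModel g st ι) : g .x * g .s * (g .x)⁻¹ = st (some 1) := by
  simpa using hm.conj_x_pow 1

theorem starInfty_eq (hm : LineModel g st ι) : starInfty (g .s) (g .w) = st none := by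
  rw [starInfty, hm.w, hm.s, hm.conj_apply, negInv_zero]

theorem lineStar_eq (hm : LineModel g st ι) : lineStar p (g .s) (g .x) (g .w) = st := by
  ext1 (_ | i)
  · exact hm.starInfty_eq
  · rw [lineStar, hm.conj_x_pow, ZMod.natCast_zmod_val]

theorem cutWord_eq (hm : LineModel g st ι) {M : ℕ} (hM : 0 < M) (k : ℕ) (hk : k * M < p) :
    cutWord (g .s) (starInfty (g .s) (g .w)) (g .x) (g .x ^ M) k = ι (cutCycle p M k) := by
  induction k with
  | zero =>
    rw [cutWord, cutCycle, hm.starInfty_eq, hm.s, hm.x, hm.transp _ _ (by simp), map_mul]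
  | succ k ih =>
    have hlt : k * M < (k + 1) * M := Nat.mul_lt_mul_of_pos_right k.lt_succ_self hM
    have hne : some (↑(k * M) : ZMod p) ≠ some ↑((k + 1) * M) := by
      rw [← linePoint_of_lt (hlt.trans hk), ← linePoint_of_lt hk]
      exact (injOn_linePoint p).ne (Set.mem_Iio.2 (by lia)) (Set.mem_Iio.2 (by lia)) hlt.ne
    rw [cutWord, cutCycle, ← pow_mul', ← pow_mul', hm.conj_x_pow, hm.conj_x_pow, hm.transp _ _ hne,
      ih (hlt.trans hk), map_mul]

theorem holds_lineRelations (hm : LineModel g st ι) {u v : (ZMod p)ˣ} (hv : (v : ZMod p) = 2)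
    (ht : g .t = ι (scaling (v ^ 2))) (hh : g .h = ι (scaling (u ^ 2)))
    (M N : ℕ) : Holds (lineRelations g fun k => g .x ^ k.val u M N) := by
  have hxt : SemiconjBy (g .t) (g .x) (g .x ^ 4) := by
    rw [hm.x_pow, hm.x, ht]
    have := (semiconjBy_scaling_translation (v ^ 2) (1 : ZMod p)).map ι
    simpa [hv, show (2 : ZMod p) ^ 2 = 4 by norm_num] using this
  have hxh : SemiconjBy (g .h) (g .x) (g .x ^ ((u ^ 2 : (ZMod p)ˣ) : ZMod p).val) := by
    rw [hm.x_pow_val, hm.x, hh]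
    simpa only [mul_one] using (semiconjBy_scaling_translation (u ^ 2) (1 : ZMod p)).map ι
  have hhs : Commute (g .h) (g .s) := by
    rw [hh, hm.s]
    exact hm.commute_of_apply_eq (by simp)
  have hwh : SemiconjBy (g .w) (g .h) (g .h)⁻¹ := by
    rw [hm.w, hh, ← map_inv]
    exact (semiconjBy_negInv_scaling _).map ι
  have hxs : Commute (g .x) (st none) := hm.x ▸ hm.commute_of_apply_eq rfl
  have transp_comm : transp (st none) (st (some 0)) = transp (st (some 0)) (st none) := by
    rw [hm.transp _ _ (by simp), hm.transp _ _ (by simp), swap_comm]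
  have commute_some {i : ZMod p} (hi : i ≠ 0) :
      Commute (transp (st none) (st (some 0))) (st (some i)) := by
    rw [hm.transp _ _ (by simp)]
    exact hm.commute_of_apply_eq (swap_apply_of_ne_of_ne (by simp) (by simpa))
  have cube (v : (ZMod p)ˣ) : ι (translation (v : ZMod p)) * g .w * ι (translation (v : ZMod p)⁻¹) *
      g .w * ι (translation (v : ZMod p)) * g .w = ι (scaling (v ^ 2)) := by
    simp only [hm.w, ← map_mul, translation_negInv_cube]
  simp only [Holds, lineRelations, conjRel, List.forall_mem_cons, List.not_mem_nil,
    false_imp_iff, implies_true, and_true, Exponent.val, hm.starInfty_eq, hm.conj_x, hm.conj_x_pow,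
    ZMod.natCast_zmod_val]
  refine ⟨?_, hxt, hxh, hhs, hwh, ?_, hxs, hm.s ▸ hm.mul_self _, hm.s ▸ transp_comm,
    hm.s ▸ commute_some one_ne_zero, hm.s ▸ commute_some u.ne_zero, ?_, ?_, ?_⟩
  · rw [hm.x_pow, CharP.cast_eq_zero, ← map_one ι]
    congr 1
    ext1 (_ | i) <;> simp
  · rw [hm.w, ← map_mul, negInv_mul_self, map_one]
  · simpa [scaling_one, ← hm.x] using cube 1
  · have := cube v
    rw [hv, ← ht, ← Nat.cast_two, ← hm.x_pow, Nat.cast_two] at this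
    rwa [hm.x_pow_val]
  · rw [hm.x_pow_val, hm.x_pow_val, hh]
    exact cube u

end LineModel

end Line

end Model

section BlockModel

open Equiv

variable {p : ℕ} {G : Type*} [Group G] {g : Gen → G} {M L : ℕ}

theorem holds_blockRelations_of_conjPermutes {st : Fin 4 × ZMod M ⊕ ZMod L → G}
    {ι : Perm (Fin 4 × ZMod M ⊕ ZMod L) →* G} (conj : ∀ π, ConjPermutes st (ι π) π) (hM : Odd M)
    {u : (ZMod p)ˣ} {N : ℕ} (hb : g .b = ι (rotateBlock M L 0))
    (hθ : g .θ = ι (permBlocks cycleThree)) (hT : g .T = ι (doubleHalve L hM))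
    (hD : doubleSwapWord (g .θ) (g .x ^ M) = ι (permBlocks doubleSwap))
    (ha : cutWord (g .s) (starInfty (g .s) (g .w)) (g .x) (g .x ^ M) 4 = ι (rotateAll 4 M L))
    (hS : ∀ j : Fin 4, (g .x ^ M) ^ (j : ℕ) * g .s * ((g .x ^ M) ^ (j : ℕ))⁻¹ = st (.inl (j, 0)))
    {l : ZMod L} (hs' : starInfty (g .s) (g .w) = st (.inr l)) :
    Holds (blockRelations g (fun k => g .x ^ k.val u M N) L) := by
  have hs : g .s = st (.inl (0, 0)) := by simpa using hS 0
  have conj_rotateBlock (σ : Perm (Fin 4)) (i : Fin 4) :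
      ι (permBlocks σ) * ι (rotateBlock M L i) * (ι (permBlocks σ))⁻¹ =
        ι (rotateBlock M L (σ i)) := by
    rw [← map_inv, ← map_mul, ← map_mul, permBlocks_conj_rotateBlock]
  have conj_apply (π ω) : ι π * st ω * (ι π)⁻¹ = st (π ω) := mul_inv_eq_of_eq_mul (conj π ω).eq
  have semiconjBy {π ω ω'} (h : π ω = ω') : ι π * st ω = st ω' * ι π := h ▸ conj π ω
  have D_sq : ι (permBlocks doubleSwap) * ι (permBlocks doubleSwap) = 1 := by
    rw [← map_mul, ← map_mul, show doubleSwap * doubleSwap = 1 by decide, map_one, map_one]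
  have θ_cube : ι (permBlocks cycleThree) ^ 3 = 1 := by
    rw [← map_pow, ← map_pow, show cycleThree ^ 3 = 1 by decide, map_one, map_one]
  have h1 := hS 1
  have h2 := hS 2
  have h3 := hS 3
  rw [hθ] at hD
  rw [hs'] at ha
  simp only [Fin.val_one, Fin.val_two, show ((3 : Fin 4) : ℕ) = 3 from rfl] at h1 h2 h3
  simp only [Holds, blockRelations, conjRel, List.forall_mem_cons, List.not_mem_nil,
    false_imp_iff, implies_true, and_true, Exponent.val, hb, hθ, hT, hs', hD, ha, h1, h2, h3,
    conj_rotateBlock, pow_zero, one_mul, inv_one, mul_one, show doubleSwap 0 = 1 by decide,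
    show cycleThree 1 = 2 by decide, show doubleSwap 2 = 3 by decide]
  rw [hs]
  refine ⟨((commute_rotateBlock_rotateAll 0).map ι).eq, ?_, semiconjBy rfl, semiconjBy rfl,
    semiconjBy rfl, semiconjBy rfl, ((commute_permBlocks_rotateAll _).map ι).eq, semiconjBy rfl,
    semiconjBy rfl, semiconjBy rfl, semiconjBy rfl, semiconjBy rfl, θ_cube, D_sq, ?_, ?_,
    semiconjBy (by simp [doubleHalve]), semiconjBy rfl, semiconjBy rfl, semiconjBy rfl, ?_, ?_, ?_⟩
  · rw [conj_apply, conj_apply]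
    rfl
  · simpa using ((doubleHalve_conj_rotateBlock hM).map ι).eq
  · simpa using ((commute_doubleHalve_rotateAll hM).map ι).eq
  · simpa using congrArg ι (doubleSwap_conj_doubleHalve (L := L) hM)
  · simpa using congrArg ι (doubleHalve_mul_cycleThree_conj (L := L) hM)
  · simpa using congrArg ι (rotateBlocks_inv_mul_rotateAll_pow (M := M) (L := L))

variable [Fact p.Prime] {st : Option (ZMod p) → G} {ι : Perm (Option (ZMod p)) →* G} [NeZero L]

theorem LineModel.holds_blockRelations [NeZero M] (hm : LineModel g st ι) (hM : Odd M) (hL : 1 < L)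
    (h : 4 * M + L = p + 1)
    (hb : g .b = ι ((blockEquiv 4 p M L h).permCongr (rotateBlock M L 0)))
    (hθ : g .θ = ι ((blockEquiv 4 p M L h).permCongr (permBlocks cycleThree)))
    (hT : g .T = ι ((blockEquiv 4 p M L h).permCongr (doubleHalve L hM))) (u : (ZMod p)ˣ) (N : ℕ) :
    Holds (blockRelations g (fun k => g .x ^ k.val u M N) L) := by
  set f := blockEquiv 4 p M L h
  obtain ⟨l, hl⟩ := exists_blockEquiv_inr_eq_none h
  refine holds_blockRelations_of_conjPermutes (st := st ∘ f)
    (ι := ι.comp f.permCongrHom.toMonoidHom) (fun π => (hm.conj _).comp fun ω => by simp) hM hb hθ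
    hT ?_ ?_ (fun j => ?_) (l := l) ?_
  · rw [← permBlocks_cycleThree_mul_conj (τ := f.symm.permCongr (translation M)) fun j r => by
      simpa [Equiv.symm_apply_eq] using translation_blockEquiv h hL j r, doubleSwapWord, hm.x_pow,
      hθ, doubleSwapWord, map_mul, map_mul, map_mul, map_inv]
    simp [← permCongr_symm]
  · rw [hm.cutWord_eq (NeZero.pos M) 4 (by lia)]
    exact congrArg ι (Equiv.ext fun ω => by
      simpa [f] using cutCycle_blockEquiv hL h (f.symm ω))
  · rw [← pow_mul', hm.conj_x_pow, Function.comp_apply, blockEquiv_inl_zero h hL]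
  · rw [hm.starInfty_eq, Function.comp_apply, hl]

end BlockModel

section CopyModel

open Equiv

theorem doubleSwapWord_permBlocks_mul_self {U W : Type*} {τ : Perm (ZMod 3 × U ⊕ W)} {v : U → W}
    (h₀ : ∀ u, τ (.inl (0, u)) = .inr (v u))
    (h : ∀ j ≠ 0, ∀ u, τ (.inl (j, u)) = .inl (j, u)) :
    doubleSwapWord (permBlocks (Equiv.addRight 1)) τ *
      doubleSwapWord (permBlocks (Equiv.addRight 1)) τ = 1 := by
  set Θ : Perm (ZMod 3 × U ⊕ W) := permBlocks (Equiv.addRight 1)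
  set Θ' := τ * Θ * τ⁻¹
  have Θ_apply (j u) : Θ (.inl (j, u)) = .inl (j + 1, u) := rfl
  have conj_apply (ω) : Θ' (τ ω) = τ (Θ ω) := by simp [Θ']
  have fix (ω) (h₀' : ∀ u, ω ≠ .inr (v u)) (h' : ∀ j ≠ 0, ∀ u, ω ≠ .inl (j, u)) : Θ' ω = ω := by
    obtain ⟨ω, rfl⟩ := τ.surjective ω
    rw [conj_apply]
    rcases ω with ⟨j, u⟩ | w
    · rcases eq_or_ne j 0 with rfl | hj
      · exact absurd (h₀ u) (h₀' u)
      · exact absurd (h j hj u) (h' j hj u)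
    · rfl
  have zero (u) : Θ' (.inl (0, u)) = .inl (0, u) := fix _ (by simp) (by simp +contextual [eq_comm])
  have one (u) : Θ' (.inl (1, u)) = .inl (2, u) := by
    rw [← h 1 (by decide), conj_apply, Θ_apply, one_add_one_eq_two, h 2 (by decide)]
  have two (u) : Θ' (.inl (2, u)) = .inr (v u) := by
    rw [← h 2 (by decide), conj_apply, Θ_apply, ← h₀]
    rfl
  have outer (u) : Θ' (.inr (v u)) = .inl (1, u) := by
    rw [← h₀, conj_apply, Θ_apply, zero_add, h 1 (by decide)]
  ext1 ω
  change Θ (Θ' (Θ (Θ' ω))) = ω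
  rcases ω with ⟨j, u⟩ | w
  · obtain rfl | rfl | rfl : j = 0 ∨ j = 1 ∨ j = 2 := by decide +revert
    · rw [zero, Θ_apply, zero_add, one]
      rfl
    · rw [one, Θ_apply, show (2 + 1 : ZMod 3) = 0 by decide, zero]
      rfl
    · rw [two, show Θ (.inr (v u)) = .inr (v u) from rfl, outer]
      rfl
  · by_cases hw : ∃ u, w = v u
    · obtain ⟨u, rfl⟩ := hw
      rw [outer, Θ_apply, one_add_one_eq_two, two]
      rfl
    · rw [fix (.inr w) (by simpa using hw) (by simp), show Θ (.inr w) = .inr w from rfl,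
        fix (.inr w) (by simpa using hw) (by simp)]
      rfl

theorem commute_blockwise_mulSingle_conj {J R T : Type*} [DecidableEq J] {σ : Perm J} {j : J}
    (hj : j ≠ σ j) (f : Perm R) (ρ : Perm T) :
    Commute (blockwise (Pi.mulSingle j f, ρ))
      (permBlocks σ * blockwise (Pi.mulSingle j f, ρ) * (permBlocks σ)⁻¹) := by
  rw [permBlocks_conj, Pi.mulSingle_comp_equiv]
  have : Commute ((Pi.mulSingle j f, ρ) : (J → Perm R) × Perm T) (Pi.mulSingle (σ j) f, ρ) :=
    Prod.ext (Pi.mulSingle_commute (f := fun _ => Perm R) hj f f).eq rfl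
  exact this.map blockwise

variable {p : ℕ} [Fact p.Prime] {G : Type*} [Group G] {g : Gen → G} {N L : ℕ} [NeZero N] [NeZero L]

/-- The line as the first copy of its initial segment together with its other points. -/
noncomputable def lineEmbedding (h : 1 * N + L = p + 1) :
    Option (ZMod p) ↪ ZMod 3 × (Fin 1 × ZMod N) ⊕ ZMod L :=
  (blockEquiv 1 p N L h).symm.toEmbedding.trans ⟨firstCopy, firstCopy_injective⟩

theorem lineEmbedding_blockEquiv (h : 1 * N + L = p + 1) (ω : Fin 1 × ZMod N ⊕ ZMod L) :
    lineEmbedding h (blockEquiv 1 p N L h ω) = firstCopy ω := by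
  simp [lineEmbedding]

theorem notMem_range_lineEmbedding (h : 1 * N + L = p + 1) {j : ZMod 3} (hj : j ≠ 0)
    (u : Fin 1 × ZMod N) : .inl (j, u) ∉ Set.range (lineEmbedding h) := by
  rintro ⟨ω, hω⟩
  obtain ⟨⟨i, r⟩ | l, rfl⟩ := (blockEquiv 1 p N L h).surjective ω <;>
    simp_all [lineEmbedding_blockEquiv, firstCopy, eq_comm]

theorem viaEmbeddingHom_cutCycle (h : 1 * N + L = p + 1) (hL : 1 < L) :
    Perm.viaEmbeddingHom (lineEmbedding h) (cutCycle p N 1) =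
      blockwise (Pi.mulSingle 0 (prodCongrRight fun _ => Equiv.addRight 1), Equiv.addRight 1) := by
  refine viaEmbeddingHom_eq_of_apply (fun ω => ?_) ?_
  · obtain ⟨a, rfl⟩ := (blockEquiv 1 p N L h).surjective ω
    rw [cutCycle_blockEquiv hL, lineEmbedding_blockEquiv, lineEmbedding_blockEquiv]
    rcases a with ⟨i, r⟩ | l <;> rfl
  · rintro (⟨j, u⟩ | l) hω
    · rcases eq_or_ne j 0 with rfl | hj
      · exact absurd ⟨_, lineEmbedding_blockEquiv h (.inl u)⟩ hω
      · simp [hj]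
    · exact absurd ⟨_, lineEmbedding_blockEquiv h (.inr l)⟩ hω

theorem translation_blockEquiv_inl (h : 1 * N + L = p + 1) (hN : 2 * N < p) (u : Fin 1 × ZMod N) :
    translation (N : ZMod p) (blockEquiv 1 p N L h (.inl u)) =
      blockEquiv 1 p N L h (.inr (u.2.val : ZMod L)) := by
  have hlt := u.2.val_lt
  simp only [blockEquiv, ofBijective_apply, Function.comp_apply, blockIndex, Fin.val_eq_zero,
    zero_mul, zero_add, one_mul, ZMod.val_natCast_of_lt (show u.2.val < L by lia)]
  rw [linePoint_of_lt (by lia), linePoint_of_lt (by lia), translation_some]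
  push_cast
  congr 1
  ring

section

variable {st : ZMod 3 × (Fin 1 × ZMod N) ⊕ ZMod L → G}
  {ι : Perm (ZMod 3 × (Fin 1 × ZMod N) ⊕ ZMod L) →* G} {h : 1 * N + L = p + 1}

theorem LineModel.doubleSwapWord_mul_self
    (hm : LineModel g (st ∘ lineEmbedding h) (ι.comp (Perm.viaEmbeddingHom (lineEmbedding h))))
    (hΘ : g .Θ = ι (permBlocks (Equiv.addRight 1))) (hN : 2 * N < p) :
    doubleSwapWord (g .Θ) (g .x ^ N) * doubleSwapWord (g .Θ) (g .x ^ N) = 1 := by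
  have := doubleSwapWord_permBlocks_mul_self
    (τ := Perm.viaEmbeddingHom (lineEmbedding h) (translation (N : ZMod p)))
    (v := fun u : Fin 1 × ZMod N => (u.2.val : ZMod L)) (fun u => ?_)
    fun j hj u => Perm.viaEmbedding_apply_of_notMem _ _ _ (notMem_range_lineEmbedding h hj u)
  · simpa only [doubleSwapWord, hΘ, hm.x_pow, map_mul, map_inv, map_one, MonoidHom.comp_apply] using
      congrArg ι this
  · rw [show Sum.inl (0, u) = lineEmbedding h _ from (lineEmbedding_blockEquiv h (.inl u)).symm,
      Perm.viaEmbeddingHom_apply, Perm.viaEmbedding_apply, translation_blockEquiv_inl h hN,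
      lineEmbedding_blockEquiv]
    rfl

theorem StarModel.commute_inl_viaEmbeddingHom (hst : StarModel st ι) {j : ZMod 3} (hj : j ≠ 0)
    (u : Fin 1 × ZMod N) (σ : Perm (Option (ZMod p))) :
    Commute (st (.inl (j, u))) (ι (Perm.viaEmbeddingHom (lineEmbedding h) σ)) :=
  (hst.commute_of_apply_eq (Perm.viaEmbedding_apply_of_notMem _ _ _
    (notMem_range_lineEmbedding h hj u))).symm

theorem LineModel.holds_copyRelations (hst : StarModel st ι) (hL : 1 < L) (hN : 2 * N < p)
    (hm : LineModel g (st ∘ lineEmbedding h) (ι.comp (Perm.viaEmbeddingHom (lineEmbedding h))))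
    (hΘ : g .Θ = ι (permBlocks (Equiv.addRight 1))) (u : (ZMod p)ˣ) (M : ℕ) :
    Holds (copyRelations g fun k => g .x ^ k.val u M N) := by
  obtain ⟨l, hl⟩ := exists_blockEquiv_inr_eq_none h
  have hs' : starInfty (g .s) (g .w) = st (.inr l) := by
    rw [hm.starInfty_eq, Function.comp_apply, ← hl, lineEmbedding_blockEquiv]
    rfl
  have hs : g .s = st (.inl (0, (0, 0))) := by
    have : some 0 = blockEquiv 1 p N L h (.inl (0, 0)) := by simp [blockEquiv_inl_zero h hL]
    rw [hm.s, Function.comp_apply, this, lineEmbedding_blockEquiv]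
    rfl
  have hc := hm.cutWord_eq (NeZero.pos N) 0 (by lia)
  have hy := hm.cutWord_eq (NeZero.pos N) 1 (by lia)
  rw [MonoidHom.comp_apply, hs'] at hc hy
  rw [viaEmbeddingHom_cutCycle h hL] at hy
  have hα := hm.transp (some 0) (some 1) (by simp)
  rw [← hm.s, ← hm.conj_x, MonoidHom.comp_apply] at hα
  set y : Perm (ZMod 3 × (Fin 1 × ZMod N) ⊕ ZMod L) :=
    blockwise (Pi.mulSingle 0 (prodCongrRight fun _ => Equiv.addRight 1), Equiv.addRight 1)
  set Θ : Perm (ZMod 3 × (Fin 1 × ZMod N) ⊕ ZMod L) := permBlocks (Equiv.addRight 1)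
  have hyΘ : Commute y (Θ * y * Θ⁻¹) := commute_blockwise_mulSingle_conj (by decide) _ _
  have hs₁ : g .Θ * g .s * (g .Θ)⁻¹ = st (.inl (1, (0, 0))) := by
    rw [hs, hΘ, hst.conj_apply]
    rfl
  have hs₂ : (g .Θ)⁻¹ * g .s * g .Θ = st (.inl (2, (0, 0))) := by
    have := hst.conj_apply Θ⁻¹ (.inl (0, (0, 0)))
    rwa [map_inv, inv_inv, ← hΘ, ← hs] at this
  have hy' : g .Θ * ι y * (g .Θ)⁻¹ = ι (Θ * y * Θ⁻¹) := by rw [hΘ, map_mul, map_mul, map_inv]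
  have commute₁ (σ) := (hst.commute_inl_viaEmbeddingHom (h := h) (j := 1) (by decide) (0, 0) σ).eq
  have commute₂ (σ) := (hst.commute_inl_viaEmbeddingHom (h := h) (j := 2) (by decide) (0, 0) σ).eq
  simp only [Holds, copyRelations, conjRel, List.forall_mem_cons, List.not_mem_nil,
    false_imp_iff, implies_true, and_true, Exponent.val, hs', hs₁, hs₂, hc, hy, hα, hy',
    hm.doubleSwapWord_mul_self hΘ hN]
  refine ⟨?_, hΘ ▸ hst.conj Θ (.inr l), (hyΘ.map ι).eq, ?_, commute₁ _, commute₁ _, commute₂ _,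
    commute₂ _⟩
  · rw [hΘ, ← map_pow, ← map_pow, show (Equiv.addRight 1 : Perm (ZMod 3)) ^ 3 = 1 by decide,
      map_one, map_one]
  · rw [hst.conj_apply, hst.conj_apply]
    rfl

end

end CopyModel

section FullModel

open Equiv

variable {p : ℕ} [Fact p.Prime] {G : Type*} [Group G] {g : Gen → G}

theorem LineModel.holds_extraRelations {st : Option (ZMod p) → G} {ι : Perm (Option (ZMod p)) →* G}
    (hm : LineModel g st ι) {N e : ℕ} (hN : 0 < N) (hz : g .z ^ (e + 1) = 1)
    (hzs : (g .z * st none) ^ (3 * e) = 1) (hzι : ∀ π, Commute (g .z) (ι π))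
    (hzΘ : Commute (g .z) (g .Θ)) (u : (ZMod p)ˣ) (M : ℕ) :
    Holds (extraRelations g (fun k => g .x ^ k.val u M N) e) := by
  have hc := hm.cutWord_eq hN 0 (by simp [NeZero.pos])
  have hα := hm.transp (some 0) (some 1) (by simp)
  rw [hm.starInfty_eq] at hc
  simp only [Holds, extraRelations, conjRel, List.forall_mem_cons, List.not_mem_nil,
    false_imp_iff, implies_true, and_true, Exponent.val, hm.starInfty_eq, hm.conj_x, hc]
  rw [hm.s, hα]
  exact ⟨hz, hzs, hzι _, hzι _, hzΘ⟩

theorem IsStarFamily.mul_pow_three {Ω : Type*} {s : Ω → G} (hs : IsStarFamily s) {a b : Ω}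
    (hab : a ≠ b) : (s a * s b) ^ 3 = 1 := by
  have braid := hs.braid a b hab
  have ha := hs.mul_self a
  have hb := hs.mul_self b
  rw [transp, transp] at braid
  rw [pow_three]
  grind

namespace StarModel

theorem isStarFamily {Ω : Type*} [DecidableEq Ω] {st : Ω → G} {ι : Perm Ω →* G}
    (hst : StarModel st ι) : IsStarFamily st where
  mul_self := hst.mul_self
  braid a b hab := by rw [hst.transp a b hab, hst.transp b a hab.symm, swap_comm]
  commute a b c hab hac hbc := by
    rw [hst.transp a b hab]
    exact hst.commute_of_apply_eq (swap_apply_of_ne_of_ne hac.symm hbc.symm)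

theorem copyStar_comp_firstCopy {U W : Type*} [DecidableEq U] [DecidableEq W]
    {st : ZMod 3 × U ⊕ W → G} {ι : Perm (ZMod 3 × U ⊕ W) →* G} (hst : StarModel st ι) :
    copyStar (st ∘ firstCopy) (ι (permBlocks (Equiv.addRight 1))) = st := by
  ext1 (⟨j, u⟩ | w)
  · rw [copyStar, Function.comp_apply, ← map_pow, hst.conj_apply]
    congr 1
    obtain rfl | rfl | rfl : j = 0 ∨ j = 1 ∨ j = 2 := by decide +revert
    all_goals rfl
  · rfl

end StarModel

variable {M L N L' e : ℕ} [NeZero M] [NeZero L] [NeZero N] [NeZero L']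

theorem StarModel.exists_furtherStar {Ω : Type*} [DecidableEq Ω] {st : Ω ⊕ Fin e → G}
    {ι : Perm (Ω ⊕ Fin e) →* G} (hst : StarModel st ι) (he : e ≤ 1) :
    ∃ z : G, (∀ i, z = st (.inr i)) ∧ z ^ (e + 1) = 1 ∧
      (∀ ω, (z * st (.inl ω)) ^ (3 * e) = 1) ∧
      ∀ π, Commute z (ι (Perm.viaEmbeddingHom Function.Embedding.inl π)) := by
  obtain rfl | rfl : e = 0 ∨ e = 1 := by lia
  · exact ⟨1, finZeroElim, one_pow _, fun _ => pow_zero _, fun _ => .one_left _⟩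
  · refine ⟨st (.inr 0), fun i => by rw [Subsingleton.elim i], ?_, fun ω => ?_, fun π => ?_⟩
    · rw [pow_two, hst.mul_self]
    · exact hst.isStarFamily.mul_pow_three Sum.inr_ne_inl
    · exact (hst.commute_of_apply_eq (Perm.viaEmbedding_apply_of_notMem _ _ _ (by simp))).symm

theorem exists_model {st : (ZMod 3 × (Fin 1 × ZMod N) ⊕ ZMod L') ⊕ Fin e → G}
    {ι : Perm ((ZMod 3 × (Fin 1 × ZMod N) ⊕ ZMod L') ⊕ Fin e) →* G} (hst : StarModel st ι)
    (hp : p ≠ 2) (he : e ≤ 1) (hM : Odd M) (hL : 1 < L) (h : 4 * M + L = p + 1) (hN : 2 * N < p)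
    (h' : 1 * N + L' = p + 1) (u : (ZMod p)ˣ) :
    ∃ g : Gen → G, Holds (allRelations g (fun k => g .x ^ k.val u M N) L e) ∧
      allStars h' e g = st := by
  have two_ne : (2 : ZMod p) ≠ 0 := Ring.two_ne_zero (by rwa [ringChar.eq (ZMod p) p])
  obtain ⟨z, z_eq, z_pow, z_mul_pow, commute_z⟩ := hst.exists_furtherStar he
  have hcopy := hst.comp .inl
  have hline := hcopy.comp (lineEmbedding h')
  set ι₂ := ι.comp (Perm.viaEmbeddingHom Function.Embedding.inl)
  set ι₁ := ι₂.comp (Perm.viaEmbeddingHom (lineEmbedding h'))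
  set f := (blockEquiv 4 p M L h).permCongr
  let g : Gen → G
    | .s => st (.inl (lineEmbedding h' (some 0)))
    | .x => ι₁ (translation 1)
    | .t => ι₁ (scaling (Units.mk0 2 two_ne ^ 2))
    | .h => ι₁ (scaling (u ^ 2))
    | .w => ι₁ negInv
    | .b => ι₁ (f (rotateBlock M L 0))
    | .θ => ι₁ (f (permBlocks cycleThree))
    | .T => ι₁ (f (doubleHalve L hM))
    | .Θ => ι₂ (permBlocks (Equiv.addRight 1))
    | .z => z
  have hm : LineModel g _ ι₁ := ⟨hline, rfl, rfl, rfl⟩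
  refine ⟨g, holds_allRelations.2 ⟨hm.holds_lineRelations rfl rfl rfl M N,
    hm.holds_blockRelations hM hL h rfl rfl rfl u N,
    hm.holds_copyRelations hcopy (by lia) hN rfl u M,
    hm.holds_extraRelations (NeZero.pos N) z_pow (z_mul_pow _) (fun _ => commute_z _)
      (commute_z _) u M⟩, ?_⟩
  have lineStar_comp : lineStar p (g .s) (g .x) (g .w) ∘ blockEquiv 1 p N L' h' =
      (st ∘ .inl) ∘ firstCopy := by
    rw [hm.lineStar_eq]
    ext1 ω
    exact congrArg (st ∘ .inl) (lineEmbedding_blockEquiv h' ω)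
  ext1 (ω | i)
  · rw [allStars, Sum.elim_inl, lineStar_comp]
    exact congrFun hcopy.copyStar_comp_firstCopy ω
  · exact z_eq i

end FullModel

/-! ### The presentation of the symmetric group of large degree -/

section Words

open Equiv FreeGroup

/-- The words in the generators that the letters of the relations stand for. -/
def letterWord {p : ℕ} (u : (ZMod p)ˣ) (M N : ℕ) : Gen ⊕ Exponent → FreeGroup Gen
  | .inl i => of i
  | .inr k => hornerWord (of .t) (of .x) (Nat.digits 4 (k.val u M N))

/-- The complete list of relations, as pairs of words in letters for the generators and for the
powers of `x`. -/
def relationWords (L e : ℕ) : List (FreeGroup (Gen ⊕ Exponent) × FreeGroup (Gen ⊕ Exponent)) :=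
  allRelations (fun i => of (.inl i)) (fun k => of (.inr k)) L e

theorem length_relationWords (L e : ℕ) : (relationWords L e).length = 51 := rfl

theorem satisfies_relationWords {G : Type*} [Group G] {W : Gen ⊕ Exponent → G} {L e : ℕ} :
    Satisfies W (relationWords L e) ↔
      Holds (allRelations (fun i => W (.inl i)) (fun k => W (.inr k)) L e) := by
  have := map_allRelations (lift W) (fun i => of (.inl i)) (fun k => of (.inr k)) L e
  simp only [Function.comp_def, lift_apply_of] at this
  rw [← this, Holds, List.forall_mem_map]
  rfl

theorem satisfies_letterWord {G : Type*} [Group G] {p : ℕ} {u : (ZMod p)ˣ} {M N L e : ℕ}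
    {g : Gen → G} :
    Satisfies (fun b => lift g (letterWord u M N b)) (relationWords L e) ↔
      Holds (allRelations g (fun k => g .x ^ k.val u M N) L e) := by
  simp only [satisfies_relationWords, letterWord, map_hornerWord, lift_apply_of]
  have hornerWord_eq (hxt : SemiconjBy (g .t) (g .x) (g .x ^ 4)) (k : Exponent) :
      hornerWord (g .t) (g .x) (Nat.digits 4 (k.val u M N)) = g .x ^ k.val u M N :=
    hornerWord_digits hxt _
  have semiconj {X : Exponent → G} (h : Holds (allRelations g X L e)) :
      SemiconjBy (g .t) (g .x) (g .x ^ 4) :=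
    h (conjRel (g .t) (g .x) (g .x ^ 4)) (by simp [allRelations, lineRelations])
  constructor <;> intro h
  · rwa [funext (hornerWord_eq (semiconj h))] at h
  · rwa [funext (hornerWord_eq (semiconj h))]

theorem Exponent.val_lt {p M N n : ℕ} [NeZero p] (hp : p < n) (hM : M < n) (hN : N < n)
    (u : (ZMod p)ˣ) (k : Exponent) : k.val u M N < n := by
  cases k
  case p | M | N => assumption
  all_goals exact (ZMod.val_lt _).trans hp

theorem norm_letterWord_le {p M N n : ℕ} [NeZero p] (hp : p < n) (hM : M < n) (hN : N < n)
    (u : (ZMod p)ˣ) (b : Gen ⊕ Exponent) :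
    (letterWord u M N b).norm ≤ 5 * (Nat.log 2 n + 1) := by
  rcases b with i | k
  · rw [letterWord, norm_of]
    lia
  · grw [letterWord, norm_hornerWord_digits_le, (Exponent.val_lt hp hM hN u k).le]

end Words

section Large

open Equiv FreeGroup

theorem closure_range_swap_none {Ω : Type*} [DecidableEq Ω] [Finite Ω] :
    Subgroup.closure (Set.range fun ω : Ω => swap none (some ω)) = ⊤ := by
  refine eq_top_of_swap_mem none ?_
  rintro (_ | ω)
  · exact swap_self (none : Option Ω) ▸ one_mem _
  · exact Subgroup.subset_closure ⟨ω, rfl⟩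

variable {p M L N L' e : ℕ} [Fact p.Prime] [NeZero M] [NeZero L] [NeZero N] [NeZero L']

theorem allStars_comp {G H : Type*} [Group G] [Group H] (φ : G →* H) (h' : 1 * N + L' = p + 1)
    (g : Gen → G) : allStars h' e (φ ∘ g) = φ ∘ allStars h' e g := by
  have lineStar_comp (ω : Option (ZMod p)) :
      lineStar p (φ (g .s)) (φ (g .x)) (φ (g .w)) ω = φ (lineStar p (g .s) (g .x) (g .w) ω) := by
    cases ω <;> simp [lineStar, starInfty]
  ext1 ((⟨_, _⟩ | _) | _) <;> simp [allStars, copyStar, lineStar_comp]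

theorem closure_range_eq_top_of_allStars {G : Type*} [Group G] {h' : 1 * N + L' = p + 1}
    {g : Gen → G} (h : Subgroup.closure (Set.range (allStars h' e g)) = ⊤) :
    Subgroup.closure (Set.range g) = ⊤ := by
  rw [eq_top_iff, ← h, Subgroup.closure_le]
  rintro _ ⟨ω, rfl⟩
  let g' (i : Gen) : Subgroup.closure (Set.range g) := ⟨g i, Subgroup.subset_closure ⟨i, rfl⟩⟩
  have := congrFun (allStars_comp (e := e) (Subgroup.subtype _) h' g') ω
  exact this ▸ (allStars h' e g' ω).2

theorem hasBoundedPresentation_perm_option (he : e ≤ 1) (hp : p ≠ 2) (hpL : p.Coprime L)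
    (hM : Odd M) (hL : 1 < L) (h : 4 * M + L = p + 1) (hN : 2 * N < p) (h' : 1 * N + L' = p + 1)
    {n : ℕ} (hn : p < n) :
    HasBoundedPresentation (Perm (Option ((ZMod 3 × (Fin 1 × ZMod N) ⊕ ZMod L') ⊕ Fin e)))
      10 51 (10 + totalNorm (relationWords L e) * (5 * (Nat.log 2 n + 1)) : ℕ) := by
  rw [← length_relationWords L e]
  obtain ⟨u, hu⟩ := IsCyclic.exists_generator (α := (ZMod p)ˣ)
  obtain ⟨v, hv, hstar⟩ := exists_model (starModel_option _) hp he hM hL h hN h' u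
  refine .of_words (closure_range_eq_top_of_allStars (hstar ▸ closure_range_swap_none))
    (norm_letterWord_le hn (by lia) (by lia) u) (satisfies_letterWord.2 hv) ?_
  intro H _ V φ hV htop hφ
  have hV := satisfies_letterWord.1 hV
  obtain ⟨hline, -, hcopy, hextra⟩ := holds_allRelations.1 hV
  have hg := lineAction hu hline
  refine (isStarFamily_allStars he (by lia) h' hg hcopy hextra).injective_of_closure_eq_top
    (closure_range_allStars he hpL hM hL h (by lia) h' hg htop hV) φ fun ω => ?_
  rw [← Function.comp_apply (f := φ), ← allStars_comp, hφ, hstar]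

end Large

/-! ### Small and large degrees -/

section Small

open Equiv FreeGroup

variable {G : Type*} [Group G]

theorem mul_self_of_braid {a b : G} (h : transp a b = transp b a) (ha : a * a = 1) :
    b * b = 1 := by
  have hab : SemiconjBy (a * b) a b := by
    rw [SemiconjBy, ← mul_assoc]
    exact h
  have := (hab.mul_right hab).eq
  rwa [ha, mul_one, eq_comm, mul_eq_right] at this

theorem commute_transp_rotate {a b c : G} (ha : a * a = 1) (hac : transp a c = transp c a)
    (h : Commute (transp a b) c) : Commute (transp c a) b := by
  have ha' (x) : a * (a * x) = x := by rw [← mul_assoc, ha, one_mul]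
  rw [← hac]
  calc transp a c * b = a * (c * transp a b) * a := by simp only [transp, mul_assoc, ha, mul_one]
    _ = a * (transp a b * c) * a := by rw [h.eq]
    _ = b * transp a c := by simp only [transp, mul_assoc, ha']

theorem isStarFamily_of_lt {Ω : Type*} [LinearOrder Ω] {s : Ω → G} (o : Ω) (hsq : s o * s o = 1)
    (hbraid : ∀ a b, a < b → transp (s a) (s b) = transp (s b) (s a))
    (hcomm : ∀ a b c, a < b → b < c → Commute (transp (s a) (s b)) (s c)) : IsStarFamily s := by
  have braid (a b) (hab : a ≠ b) : transp (s a) (s b) = transp (s b) (s a) :=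
    hab.lt_or_gt.elim (hbraid a b) fun h => (hbraid b a h).symm
  have mul_self (a) : s a * s a = 1 := by
    rcases eq_or_ne o a with rfl | ha
    · exact hsq
    · exact mul_self_of_braid (braid o a ha) hsq
  have reflect (a b c) (hab : a ≠ b) (h : Commute (transp (s a) (s b)) (s c)) :
      Commute (transp (s b) (s a)) (s c) := braid a b hab ▸ h
  have ordered (a b c) (hab : a < b) (hac : a ≠ c) (hbc : b ≠ c) :
      Commute (transp (s a) (s b)) (s c) := by
    rcases hbc.lt_or_gt with h | h
    · exact hcomm a b c hab h
    refine reflect b a c hab.ne' (commute_transp_rotate (mul_self a) (braid a b hab.ne) ?_)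
    rcases hac.lt_or_gt with h' | h'
    · exact hcomm a c b h' h
    · exact reflect c a b h'.ne (hcomm c a b h' hab)
  refine ⟨mul_self, braid, fun a b c hab hac hbc => ?_⟩
  rcases hab.lt_or_gt with h | h
  · exact ordered a b c h hac hbc
  · exact reflect b a c h.ne (ordered b a c h hbc hac)

variable {m : ℕ} [NeZero m]

/-- Relations for a star family, one for each unordered pair and one for each unordered triple. -/
noncomputable def starRelations (s : Fin m → G) : List (G × G) :=
  (s 0 * s 0, 1) ::
    ({q : Fin m × Fin m | q.1 < q.2} : Finset _).toList.map
      (fun q => (transp (s q.1) (s q.2), transp (s q.2) (s q.1))) ++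
    ({q : Fin m × Fin m × Fin m | q.1 < q.2.1 ∧ q.2.1 < q.2.2} : Finset _).toList.map
      fun q => conjRel (transp (s q.1) (s q.2.1)) (s q.2.2) (s q.2.2)

theorem length_starRelations_le (hm : m ≤ 7) (s : Fin m → G) : (starRelations s).length ≤ 58 := by
  have : ∀ m ≤ 7, Finset.card {q : Fin m × Fin m | q.1 < q.2} + 1 +
      Finset.card {q : Fin m × Fin m × Fin m | q.1 < q.2.1 ∧ q.2.1 < q.2.2} ≤ 58 := by decide
  simpa only [starRelations, List.length_append, List.length_cons, List.length_map,
    Finset.length_toList] using this m hm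

theorem map_starRelations {H : Type*} [Group H] (f : G →* H) (s : Fin m → G) :
    (starRelations s).map (Prod.map f f) = starRelations (f ∘ s) := by
  simp [starRelations, conjRel, map_transp, Function.comp_def]

theorem holds_starRelations {s : Fin m → G} : Holds (starRelations s) ↔ IsStarFamily s := by
  simp only [Holds, starRelations, conjRel, List.forall_mem_cons, List.forall_mem_append,
    List.forall_mem_map, Finset.mem_toList, Finset.mem_filter, Finset.mem_univ, true_and,
    List.cons_append, Prod.forall]
  exact ⟨fun ⟨hsq, hbraid, hcomm⟩ => isStarFamily_of_lt 0 hsq hbraid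
      fun a b c hab hbc => hcomm a b c ⟨hab, hbc⟩,
    fun hs => ⟨hs.mul_self 0, fun a b h => hs.braid a b h.ne,
      fun a b c h => hs.commute a b c h.1.ne (h.1.trans h.2).ne h.2.ne⟩⟩

theorem hasBoundedPresentation_perm_option_fin (hm : m ≤ 7) :
    ∃ L, HasBoundedPresentation (Perm (Option (Fin m))) 18 58 L := by
  have satisfies_iff {G : Type} [Group G] (V : Fin m → G) :
      Satisfies (fun i => lift V (of i)) (starRelations of) ↔ IsStarFamily V := by
    have := map_starRelations (lift V) of
    simp only [Function.comp_def, lift_apply_of] at this ⊢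
    rw [← holds_starRelations, ← this, Holds, List.forall_mem_map]
    rfl
  have hst := (starModel_option (Fin m)).isStarFamily
  have := HasBoundedPresentation.of_words closure_range_swap_none (words := of)
    (fun i => (norm_of i).le) ((satisfies_iff _).2 hst) fun H _ V φ hV htop hφ =>
      ((satisfies_iff V).1 hV).injective_of_closure_eq_top htop φ (congrFun hφ)
  exact ⟨_, this.mono (by simp; lia) (length_starRelations_le hm _) le_rfl⟩

end Small

section Degrees

open Equiv

theorem hasBoundedPresentation_perm_fin_of_le_eight {n : ℕ} (h2 : 2 ≤ n) (h8 : n ≤ 8) :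
    ∃ L, HasBoundedPresentation (Perm (Fin n)) 18 58 L := by
  obtain ⟨m, rfl⟩ := Nat.exists_eq_add_of_le' (one_le_two.trans h2)
  have : NeZero m := ⟨by lia⟩
  obtain ⟨L, hL⟩ := hasBoundedPresentation_perm_option_fin (m := m) (by lia)
  exact ⟨L, hL.congr (finSuccEquiv m).symm.permCongrHom⟩

theorem exists_odd_four_mul_add {p : ℕ} (hp : p.Prime) (h5 : 5 ≤ p) :
    ∃ M L, Odd M ∧ 1 < L ∧ L ≤ 8 ∧ p.Coprime L ∧ 4 * M + L = p + 1 := by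
  have hodd : p % 2 = 1 := hp.eq_two_or_odd.resolve_left (by lia)
  refine ⟨2 * ((p - 4) / 8) + 1, p + 1 - 4 * (2 * ((p - 4) / 8) + 1), ⟨_, rfl⟩, by lia, by lia,
    hp.coprime_iff_not_dvd.2 fun hdvd => ?_, by lia⟩
  obtain ⟨_ | _ | k, hk⟩ := hdvd <;> lia

theorem hasBoundedPresentation_perm_fin_of_nine_le {n : ℕ} (hn : 9 ≤ n) :
    ∃ L ≤ 8, ∃ e ≤ 1, HasBoundedPresentation (Perm (Fin n)) 10 51
      (10 + totalNorm (relationWords L e) * (5 * (Nat.log 2 n + 1)) : ℕ) := by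
  obtain ⟨m, e, he, rfl⟩ : ∃ m e, e ≤ 1 ∧ n = 2 * m + 3 + e :=
    ⟨(n - 3) / 2, (n - 3) % 2, by lia, by lia⟩
  obtain ⟨p, hp, hmp, hpm⟩ := Nat.exists_prime_lt_and_le_two_mul m (by lia)
  have h5 : 5 ≤ p := by
    have : p ≠ 4 := by rintro rfl; exact absurd hp (by norm_num)
    lia
  obtain ⟨M, L, hM, hL, hL8, hpL, h⟩ := exists_odd_four_mul_add hp h5
  obtain ⟨N, hN⟩ : ∃ N, 2 * m + 1 = p + 2 * N :=
    ⟨(2 * m + 1 - p) / 2, by have := hp.eq_two_or_odd; lia⟩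
  obtain ⟨L', hL'⟩ : ∃ L', 1 * N + L' = p + 1 := ⟨p + 1 - N, by lia⟩
  have : Fact p.Prime := ⟨hp⟩
  have : NeZero M := ⟨hM.pos.ne'⟩
  have : NeZero L := ⟨by lia⟩
  have : NeZero N := ⟨by lia⟩
  have : NeZero L' := ⟨by lia⟩
  have hcard : Fintype.card (Option ((ZMod 3 × (Fin 1 × ZMod N) ⊕ ZMod L') ⊕ Fin e)) =
      2 * m + 3 + e := by
    simp [ZMod.card]
    lia
  exact ⟨L, hL8, e, he, (hasBoundedPresentation_perm_option he (by lia) hpL hM hL h (by lia) hL'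
    (by lia)).congr (Fintype.equivFinOfCardEq hcard).permCongrHom⟩

theorem cast_mul_log_le {a b n : ℕ} : ((a + b * (Nat.log 2 n + 1) : ℕ) : ℝ) ≤
    (a + b : ℕ) * (1 + Real.logb 2 n) := by
  have hlog : (Nat.log 2 n : ℝ) ≤ Real.logb 2 n := Real.natLog_le_logb n 2
  push_cast
  nlinarith [hlog, (Nat.log 2 n).cast_nonneg (α := ℝ), a.cast_nonneg (α := ℝ),
    b.cast_nonneg (α := ℝ)]

end Degrees

/-- There is a constant `C` such that for every `n ≥ 2` the symmetric group `S_n` has a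
presentation with at most `18` generators and at most `58` relators, of length at most
`C·(1 + log₂ n)`. -/
theorem symmetricGroup_short_bounded_presentation :
    ∃ C : ℝ, ∀ n : ℕ, 2 ≤ n →
      HasBoundedPresentation (Equiv.Perm (Fin n)) 18 58 (C * (1 + Real.logb 2 n)) := by
  have hsmall (n : ℕ) (h2 : 2 ≤ n) (h8 : n ≤ 8) := hasBoundedPresentation_perm_fin_of_le_eight h2 h8
  choose! f hf using hsmall
  obtain ⟨B, hB⟩ := ((Set.finite_Iic 8).image f).bddAbove
  obtain ⟨C, hC⟩ := ((Set.finite_Iic 8).image2 (fun L e => 10 + totalNorm (relationWords L e) * 5)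
    (Set.finite_Iic 1)).bddAbove
  refine ⟨max B C, fun n hn => ?_⟩
  have hlog : 0 ≤ Real.logb 2 n := Real.logb_nonneg one_lt_two (by norm_cast; lia)
  have hC0 : 0 ≤ max B C := le_max_of_le_right C.cast_nonneg
  rcases le_or_gt n 8 with h8 | h9
  · refine (hf n hn h8).mono le_rfl le_rfl ?_
    calc f n ≤ max B C := le_max_of_le_left (hB ⟨n, h8, rfl⟩)
      _ ≤ max B C * (1 + Real.logb 2 n) := le_mul_of_one_le_right hC0 (by linarith)
  · obtain ⟨L, hL, e, he, h⟩ := hasBoundedPresentation_perm_fin_of_nine_le h9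
    refine h.mono (by lia) (by lia) ?_
    rw [← mul_assoc]
    refine cast_mul_log_le.trans ?_
    gcongr
    exact le_max_of_le_right (mod_cast hC ⟨L, hL, e, he, rfl⟩)
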